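/- arXiv:1310.3480 — 3 statements merged into one kernel-verified Lean document; each statement's English description precedes it below -/
import Mathlib

section
/- Let x, y ≥ 0 be integers and B = B(x,y). Then dim_k Hom_B(B/Be₁B, e₁B) = y, dim_k Ext¹_B(B/Be₁B, e₁B) = x, and Ext^p_B(B/Be₁B, e₁B) = 0 for all p ≥ 2, where B/Be₁B and e₁B are regarded as right B-modules. -/
/-!
The products `β_q α_p` vanish in `B = B(x,y)`, so `B` has the `k`-basis
`e₁, e₂, α_p, β_q, α_p β_q`. Spanning follows from the relations; linear independence is read off
from an explicit action of `B` on the space of coordinate vectors (`genOp`, `rep`, `coord`).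

Set `M = B / Be₁B`. Every element of `e₂B ∩ Be₁B` is uniquely of the form `∑ α_p z_p` with
`z_p ∈ e₁B`, and `e₂B` maps onto `M`. This yields a projective resolution
`0 ⟶ (e₁B)^x ⟶ e₂B ⟶ M ⟶ 0` (`dLin`, `piLin`). A morphism `e₂B ⟶ e₁B` is left multiplication by an
element of `e₁Be₂ = span (β_q)`, and it vanishes after composition with the differential because
`β_q α_p = 0`. Thus the complex `Hom(P_•, e₁B)` has zero differentials, and `Ext^n(M, e₁B)` is
`Hom(P_n, e₁B)` (`extIso`): it is `e₁Be₂`, of dimension `y`, for `n = 0` (`homZero_bijective`);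
it is `(e₁Be₁)^x = k^x`, of dimension `x`, for `n = 1` (`homOne_bijective`); and it is zero for
`n ≥ 2`.
-/

/-!
Statement 7: for `B = B(x,y)`, one has `dim_k Hom_B(B/Be₁B, e₁B) = y`,
`dim_k Ext¹_B(B/Be₁B, e₁B) = x` and `Ext^p_B(B/Be₁B, e₁B) = 0` for all `p ≥ 2`,
where `B/Be₁B` and `e₁B` are right `B`-modules.  (We identify `Hom` with `Ext⁰`.)
-/

noncomputable section
set_option linter.unusedSectionVars false

universe u

open CategoryTheory

section QuasiHereditaryDefs

variable {A : Type u} [Ring A]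

/-- The corner `eAe` of a ring `A` at an element `e`, as a non-unital subring:
it consists of all `z` with `e * z = z = z * e`. -/
def cornerNonUnitalSubring (e : A) : NonUnitalSubring A where
  carrier := {z | e * z = z ∧ z * e = z}
  add_mem' := by
    rintro a b ⟨ha1, ha2⟩ ⟨hb1, hb2⟩
    exact ⟨by rw [mul_add, ha1, hb1], by rw [add_mul, ha2, hb2]⟩
  zero_mem' := ⟨mul_zero e, zero_mul e⟩
  neg_mem' := by
    rintro a ⟨h1, h2⟩
    exact ⟨by rw [mul_neg, h1], by rw [neg_mul, h2]⟩
  mul_mem' := by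
    rintro a b ⟨ha1, -⟩ ⟨-, hb2⟩
    exact ⟨by rw [← mul_assoc, ha1], by rw [mul_assoc, hb2]⟩

/-- If `e` is idempotent, the corner `eAe` is a unital ring with unit `e`. -/
def cornerRing {e : A} (he : IsIdempotentElem e) : Ring (cornerNonUnitalSubring e) :=
  { (inferInstance : NonUnitalRing (cornerNonUnitalSubring e)) with
    one := ⟨e, he, he⟩
    one_mul := fun a => Subtype.ext a.2.1
    mul_one := fun a => Subtype.ext a.2.2 }

/-- A two-sided ideal of `A`, regarded as a submodule of the right regular `A`-module
(i.e. as a left module over `Aᵐᵒᵖ`). -/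
def TwoSidedIdeal.rightSubmodule (J : TwoSidedIdeal A) : Submodule Aᵐᵒᵖ A where
  carrier := J
  add_mem' := J.add_mem
  zero_mem' := J.zero_mem
  smul_mem' := fun c {z} hz => by
    simpa [MulOpposite.smul_eq_mul_unop] using J.mul_mem_right z c.unop hz

/-- A two-sided ideal `J` of a ring `A` is a heredity ideal if `J = AeA` for some
idempotent `e` such that the corner ring `eAe` is semisimple and `J` is projective
as a right `A`-module. -/
def IsHeredityIdeal (J : TwoSidedIdeal A) : Prop :=
  ∃ e : A, ∃ he : IsIdempotentElem e,
    J = TwoSidedIdeal.span {e} ∧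
    (letI := cornerRing he; IsSemisimpleRing (cornerNonUnitalSubring e)) ∧
    Module.Projective Aᵐᵒᵖ J.rightSubmodule

/-- A ring `A` is quasi-hereditary if there is a chain of two-sided ideals
`0 = J₀ ⊆ J₁ ⊆ ⋯ ⊆ J_m = A` such that for each `i`, the image of `J_{i+1}` in the
quotient ring `A / J_i` is a heredity ideal of `A / J_i`. -/
def IsQuasiHereditary (A : Type u) [Ring A] : Prop :=
  ∃ (m : ℕ) (J : Fin (m + 1) → TwoSidedIdeal A),
    Monotone J ∧ J 0 = ⊥ ∧ J (Fin.last m) = ⊤ ∧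
    ∀ i : Fin m,
      IsHeredityIdeal
        (TwoSidedIdeal.span ((J i.castSucc).ringCon.mk' '' (J i.succ : Set A)))

end QuasiHereditaryDefs
/-- The generators of the path algebra of the quiver `Q(x,y)`: the two trivial paths
`e₁`, `e₂`, the `x` arrows `a p : 1 → 2` and the `y` arrows `b q : 2 → 1`. -/
inductive BGen (x y : ℕ) : Type
  | e1 : BGen x y
  | e2 : BGen x y
  | a (p : Fin x) : BGen x y
  | b (q : Fin y) : BGen x y

/-- The relations defining `B(x,y)` as a quotient of the free algebra on `BGen x y`:
the path algebra relations for the quiver `Q(x,y)` (products are written in composition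
order: `u * v` means "first traverse `v`, then `u`") together with the relations
`β_q * α_p = 0` killing all length-two paths traversing first some `α_p`, then some `β_q`. -/
inductive BRel (k : Type) [Field k] (x y : ℕ) :
    FreeAlgebra k (BGen x y) → FreeAlgebra k (BGen x y) → Prop
  | idem1 : BRel k x y (FreeAlgebra.ι k BGen.e1 * FreeAlgebra.ι k BGen.e1)
      (FreeAlgebra.ι k BGen.e1)
  | idem2 : BRel k x y (FreeAlgebra.ι k BGen.e2 * FreeAlgebra.ι k BGen.e2)
      (FreeAlgebra.ι k BGen.e2)
  | orth12 : BRel k x y (FreeAlgebra.ι k BGen.e1 * FreeAlgebra.ι k BGen.e2) 0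
  | orth21 : BRel k x y (FreeAlgebra.ι k BGen.e2 * FreeAlgebra.ι k BGen.e1) 0
  | sum : BRel k x y (FreeAlgebra.ι k BGen.e1 + FreeAlgebra.ι k BGen.e2) 1
  | a_tgt (p : Fin x) : BRel k x y (FreeAlgebra.ι k BGen.e2 * FreeAlgebra.ι k (BGen.a p))
      (FreeAlgebra.ι k (BGen.a p))
  | a_src (p : Fin x) : BRel k x y (FreeAlgebra.ι k (BGen.a p) * FreeAlgebra.ι k BGen.e1)
      (FreeAlgebra.ι k (BGen.a p))
  | b_tgt (q : Fin y) : BRel k x y (FreeAlgebra.ι k BGen.e1 * FreeAlgebra.ι k (BGen.b q))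
      (FreeAlgebra.ι k (BGen.b q))
  | b_src (q : Fin y) : BRel k x y (FreeAlgebra.ι k (BGen.b q) * FreeAlgebra.ι k BGen.e2)
      (FreeAlgebra.ι k (BGen.b q))
  | ba (p : Fin x) (q : Fin y) :
      BRel k x y (FreeAlgebra.ι k (BGen.b q) * FreeAlgebra.ι k (BGen.a p)) 0

/-- The quasi-hereditary algebra `B(x,y)`: the path algebra of the quiver `Q(x,y)`
modulo the ideal generated by the paths `β_q α_p`. -/
def BAlgebra (k : Type) [Field k] (x y : ℕ) : Type := RingQuot (BRel k x y)

instance (k : Type) [Field k] (x y : ℕ) : Ring (BAlgebra k x y) :=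
  inferInstanceAs (Ring (RingQuot (BRel k x y)))

instance (k : Type) [Field k] (x y : ℕ) : Algebra k (BAlgebra k x y) :=
  inferInstanceAs (Algebra k (RingQuot (BRel k x y)))

variable (k : Type) [Field k] (x y : ℕ)

/-- The idempotent `e₁ ∈ B(x,y)`. -/
def Be1 : BAlgebra k x y := RingQuot.mkAlgHom k (BRel k x y) (FreeAlgebra.ι k BGen.e1)

/-- The idempotent `e₂ ∈ B(x,y)`. -/
def Be2 : BAlgebra k x y := RingQuot.mkAlgHom k (BRel k x y) (FreeAlgebra.ι k BGen.e2)

/-- The arrow `α_p ∈ B(x,y)`. -/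
def Ba (p : Fin x) : BAlgebra k x y := RingQuot.mkAlgHom k (BRel k x y) (FreeAlgebra.ι k (BGen.a p))

/-- The arrow `β_q ∈ B(x,y)`. -/
def Bb (q : Fin y) : BAlgebra k x y := RingQuot.mkAlgHom k (BRel k x y) (FreeAlgebra.ι k (BGen.b q))
section ProjDefs

variable (k : Type) [Field k] (x y : ℕ)

/-- The right submodule `uB = {z | u z = z}` of `B(x,y)` determined by an idempotent
`u` (for `u = e₁, e₂` these are the indecomposable projective right modules `P₁`, `P₂`). -/
def projAt (u : BAlgebra k x y) : Submodule (BAlgebra k x y)ᵐᵒᵖ (BAlgebra k x y) where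
  carrier := {z | u * z = z}
  add_mem' := fun {a b} ha hb => by
    show u * (a + b) = a + b
    rw [mul_add, show u * a = a from ha, show u * b = b from hb]
  zero_mem' := mul_zero u
  smul_mem' := fun c {z} hz => by
    show u * (z * c.unop) = z * c.unop
    rw [← mul_assoc, show u * z = z from hz]

end ProjDefs

namespace BAlg

/-! ### Normal form for elements of `B(x,y)` -/

/-- Coordinate space for the path basis of `B(x,y)`: a tuple `((c, u), (d, v, w))` collects the
coefficients of `e₁`, `α_p`, `e₂`, `β_q` and `α_p β_q`. -/
abbrev Coord : Type := (k × (Fin x → k)) × (k × (Fin y → k) × (Fin x → Fin y → k))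

/-- Left multiplication by a generator of `B(x,y)`, written in path coordinates. -/
def genOp : BGen x y → Module.End k (Coord k x y)
  | .e1 =>
    { toFun := fun z => ((z.1.1, 0), (0, z.2.2.1, 0))
      map_add' := fun a b => by simp
      map_smul' := fun a b => by simp }
  | .e2 =>
    { toFun := fun z => ((0, z.1.2), (z.2.1, 0, z.2.2.2))
      map_add' := fun a b => by simp
      map_smul' := fun a b => by simp }
  | .a p =>
    { toFun := fun z => ((0, Pi.single p z.1.1), (0, 0, Pi.single p z.2.2.1))
      map_add' := fun a b => by simp [Pi.single_add]
      map_smul' := fun a b => by simp [← Pi.single_smul] }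
  | .b q =>
    { toFun := fun z => ((0, 0), (0, Pi.single q z.2.1, 0))
      map_add' := fun a b => by simp [Pi.single_add]
      map_smul' := fun a b => by simp [← Pi.single_smul] }

/-- The left regular representation of `B(x,y)` in path coordinates. -/
def rep : BAlgebra k x y →ₐ[k] Module.End k (Coord k x y) :=
  RingQuot.liftAlgHom k ⟨FreeAlgebra.lift k (genOp k x y), fun _ _ h => by
    cases h <;> simp only [map_mul, map_add, map_zero, map_one, FreeAlgebra.lift_ι_apply] <;>
      refine LinearMap.ext fun z => ?_ <;> simp [genOp, Prod.ext_iff]⟩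

/-- The character of `B(x,y)` with `e₂ ↦ 1` that kills `e₁` and all arrows. -/
def chi : BAlgebra k x y →ₐ[k] k :=
  RingQuot.liftAlgHom k ⟨FreeAlgebra.lift k (fun g => match g with | .e2 => 1 | _ => 0),
    fun _ _ h => by
      cases h <;> simp only [map_mul, map_add, map_zero, map_one, FreeAlgebra.lift_ι_apply] <;>
        simp⟩

@[simp] lemma rep_e1 : rep k x y (Be1 k x y) = genOp k x y .e1 :=
  (RingQuot.liftAlgHom_mkAlgHom_apply ..).trans (FreeAlgebra.lift_ι_apply ..)
@[simp] lemma rep_e2 : rep k x y (Be2 k x y) = genOp k x y .e2 :=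
  (RingQuot.liftAlgHom_mkAlgHom_apply ..).trans (FreeAlgebra.lift_ι_apply ..)
@[simp] lemma rep_a (p : Fin x) : rep k x y (Ba k x y p) = genOp k x y (.a p) :=
  (RingQuot.liftAlgHom_mkAlgHom_apply ..).trans (FreeAlgebra.lift_ι_apply ..)
@[simp] lemma rep_b (q : Fin y) : rep k x y (Bb k x y q) = genOp k x y (.b q) :=
  (RingQuot.liftAlgHom_mkAlgHom_apply ..).trans (FreeAlgebra.lift_ι_apply ..)

@[simp] lemma chi_e1 : chi k x y (Be1 k x y) = 0 :=
  (RingQuot.liftAlgHom_mkAlgHom_apply ..).trans (FreeAlgebra.lift_ι_apply ..)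
@[simp] lemma chi_e2 : chi k x y (Be2 k x y) = 1 :=
  (RingQuot.liftAlgHom_mkAlgHom_apply ..).trans (FreeAlgebra.lift_ι_apply ..)
@[simp] lemma chi_a (p : Fin x) : chi k x y (Ba k x y p) = 0 :=
  (RingQuot.liftAlgHom_mkAlgHom_apply ..).trans (FreeAlgebra.lift_ι_apply ..)
@[simp] lemma chi_b (q : Fin y) : chi k x y (Bb k x y q) = 0 :=
  (RingQuot.liftAlgHom_mkAlgHom_apply ..).trans (FreeAlgebra.lift_ι_apply ..)

/-- The quotient map from the free algebra onto `B(x,y)`. -/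
def mk : FreeAlgebra k (BGen x y) →ₐ[k] BAlgebra k x y := RingQuot.mkAlgHom k (BRel k x y)

lemma mk_rel {s t : FreeAlgebra k (BGen x y)} (h : BRel k x y s t) : mk k x y s = mk k x y t :=
  RingQuot.mkAlgHom_rel k h

@[simp] lemma e1_e1 : Be1 k x y * Be1 k x y = Be1 k x y :=
  (map_mul (mk k x y) _ _).symm.trans (mk_rel k x y .idem1)
@[simp] lemma e2_e2 : Be2 k x y * Be2 k x y = Be2 k x y :=
  (map_mul (mk k x y) _ _).symm.trans (mk_rel k x y .idem2)
@[simp] lemma e1_e2 : Be1 k x y * Be2 k x y = 0 :=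
  (map_mul (mk k x y) _ _).symm.trans ((mk_rel k x y .orth12).trans (map_zero _))
@[simp] lemma e2_e1 : Be2 k x y * Be1 k x y = 0 :=
  (map_mul (mk k x y) _ _).symm.trans ((mk_rel k x y .orth21).trans (map_zero _))
lemma e1_add_e2 : Be1 k x y + Be2 k x y = 1 :=
  (map_add (mk k x y) _ _).symm.trans ((mk_rel k x y .sum).trans (map_one _))
@[simp] lemma e2_a (p : Fin x) : Be2 k x y * Ba k x y p = Ba k x y p :=
  (map_mul (mk k x y) _ _).symm.trans (mk_rel k x y (.a_tgt p))
@[simp] lemma a_e1 (p : Fin x) : Ba k x y p * Be1 k x y = Ba k x y p :=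
  (map_mul (mk k x y) _ _).symm.trans (mk_rel k x y (.a_src p))
@[simp] lemma e1_b (q : Fin y) : Be1 k x y * Bb k x y q = Bb k x y q :=
  (map_mul (mk k x y) _ _).symm.trans (mk_rel k x y (.b_tgt q))
@[simp] lemma b_e2 (q : Fin y) : Bb k x y q * Be2 k x y = Bb k x y q :=
  (map_mul (mk k x y) _ _).symm.trans (mk_rel k x y (.b_src q))
@[simp] lemma b_a (q : Fin y) (p : Fin x) : Bb k x y q * Ba k x y p = 0 :=
  (map_mul (mk k x y) _ _).symm.trans ((mk_rel k x y (.ba p q)).trans (map_zero _))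
@[simp] lemma e1_a (p : Fin x) : Be1 k x y * Ba k x y p = 0 := by
  rw [← e2_a, ← mul_assoc, e1_e2, zero_mul]
@[simp] lemma e2_b (q : Fin y) : Be2 k x y * Bb k x y q = 0 := by
  rw [← e1_b, ← mul_assoc, e2_e1, zero_mul]
@[simp] lemma a_e2 (p : Fin x) : Ba k x y p * Be2 k x y = 0 := by
  rw [← a_e1, mul_assoc, e1_e2, mul_zero]
@[simp] lemma b_e1 (q : Fin y) : Bb k x y q * Be1 k x y = 0 := by
  rw [← b_e2, mul_assoc, e2_e1, mul_zero]
@[simp] lemma a_a (p p' : Fin x) : Ba k x y p * Ba k x y p' = 0 := by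
  rw [← e2_a k x y p', ← mul_assoc, a_e2, zero_mul]
@[simp] lemma b_b (q q' : Fin y) : Bb k x y q * Bb k x y q' = 0 := by
  rw [← e1_b k x y q', ← mul_assoc, b_e1, zero_mul]

/-- The linear combination of paths with prescribed coordinates. -/
def ofCoord (z : Coord k x y) : BAlgebra k x y :=
  z.1.1 • Be1 k x y + ∑ p, z.1.2 p • Ba k x y p + z.2.1 • Be2 k x y +
    ∑ q, z.2.2.1 q • Bb k x y q + ∑ p, ∑ q, z.2.2.2 p q • (Ba k x y p * Bb k x y q)

lemma ofCoord_add (z w : Coord k x y) :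
    ofCoord k x y (z + w) = ofCoord k x y z + ofCoord k x y w := by
  simp only [ofCoord, Prod.fst_add, Prod.snd_add, Pi.add_apply, add_smul, Finset.sum_add_distrib]
  abel

lemma ofCoord_smul (c : k) (z : Coord k x y) :
    ofCoord k x y (c • z) = c • ofCoord k x y z := by
  simp only [ofCoord, Prod.smul_fst, Prod.smul_snd, Pi.smul_apply, smul_eq_mul, mul_smul,
    smul_add, Finset.smul_sum]

lemma ofCoord_genOp (g : BGen x y) (z : Coord k x y) :
    ofCoord k x y (genOp k x y g z) = mk k x y (FreeAlgebra.ι k g) * ofCoord k x y z := by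
  cases g with
  | e1 =>
    change ofCoord k x y _ = Be1 k x y * _
    simp [ofCoord, genOp, mul_add, Finset.mul_sum, ← mul_assoc]
  | e2 =>
    change ofCoord k x y _ = Be2 k x y * _
    simp [ofCoord, genOp, mul_add, Finset.mul_sum, ← mul_assoc]
  | a p =>
    change ofCoord k x y _ = Ba k x y p * _
    simp [ofCoord, genOp, mul_add, Finset.mul_sum, ← mul_assoc,
      Pi.single_apply, ite_apply, Finset.sum_ite_irrel]
  | b q =>
    change ofCoord k x y _ = Bb k x y q * _
    simp [ofCoord, genOp, mul_add, Finset.mul_sum, ← mul_assoc, Pi.single_apply]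

/-- Taking linear combinations of paths intertwines the coordinate representation with left
multiplication. -/
lemma ofCoord_rep (z : BAlgebra k x y) (w : Coord k x y) :
    ofCoord k x y (rep k x y z w) = z * ofCoord k x y w := by
  obtain ⟨f, rfl⟩ : ∃ f, mk k x y f = z := RingQuot.mkAlgHom_surjective k (BRel k x y) z
  induction f generalizing w with
  | grade0 r =>
    rw [AlgHom.commutes, AlgHom.commutes, Module.algebraMap_end_apply, ofCoord_smul,
      Algebra.smul_def]
  | grade1 g =>
    have h : rep k x y (mk k x y (FreeAlgebra.ι k g)) = genOp k x y g :=
      (RingQuot.liftAlgHom_mkAlgHom_apply ..).trans (FreeAlgebra.lift_ι_apply ..)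
    rw [h, ofCoord_genOp]
  | mul a b ha hb => rw [map_mul, map_mul, Module.End.mul_apply, ha, hb, mul_assoc]
  | add a b ha hb => rw [map_add, map_add, LinearMap.add_apply, ofCoord_add, ha, hb, add_mul]

/-- The path coordinates of an element: its action on the coordinates of `1 = e₁ + e₂`. -/
def coord (z : BAlgebra k x y) : Coord k x y := rep k x y z ((1, 0), (1, 0, 0))

lemma ofCoord_coord (z : BAlgebra k x y) : ofCoord k x y (coord k x y z) = z := by
  rw [coord, ofCoord_rep]
  simp [ofCoord, e1_add_e2]

lemma coord_mul (z w : BAlgebra k x y) : coord k x y (z * w) = rep k x y z (coord k x y w) := by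
  simp [coord]

lemma chi_eq (z : BAlgebra k x y) : chi k x y z = (coord k x y z).2.1 := by
  conv_lhs => rw [← ofCoord_coord k x y z]
  simp [ofCoord]

/-- `e₁ B e₂` is spanned by the arrows `β_q`. -/
lemma e1_mul_e2 (z : BAlgebra k x y) :
    Be1 k x y * z * Be2 k x y = ∑ q, (coord k x y z).2.2.1 q • Bb k x y q := by
  conv_lhs => rw [← ofCoord_coord k x y z]
  simp [ofCoord, mul_add, add_mul, Finset.mul_sum, Finset.sum_mul, ← mul_assoc]

/-- `e₁ B e₁` is spanned by `e₁`. -/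
lemma e1_mul_e1 (z : BAlgebra k x y) :
    Be1 k x y * z * Be1 k x y = (coord k x y z).1.1 • Be1 k x y := by
  conv_lhs => rw [← ofCoord_coord k x y z]
  simp [ofCoord, mul_add, add_mul, Finset.mul_sum, Finset.sum_mul, ← mul_assoc]

/-- `e₁ B` is spanned by `e₁` and the arrows `β_q`. -/
lemma e1_mul (z : BAlgebra k x y) :
    Be1 k x y * z = (coord k x y z).1.1 • Be1 k x y + ∑ q, (coord k x y z).2.2.1 q • Bb k x y q := by
  conv_lhs => rw [← ofCoord_coord k x y z]
  simp [ofCoord, mul_add, Finset.mul_sum, ← mul_assoc]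

/-- The elements of `e₂ B` killed by `chi` are sums `∑ α_p z_p` with `z_p ∈ e₁ B`. -/
lemma e2_mul_of_chi (z : BAlgebra k x y) (hz : chi k x y z = 0) :
    Be2 k x y * z = ∑ p, Ba k x y p * ((coord k x y z).1.2 p • Be1 k x y +
      ∑ q, (coord k x y z).2.2.2 p q • Bb k x y q) := by
  rw [chi_eq] at hz
  conv_lhs => rw [← ofCoord_coord k x y z]
  simp [ofCoord, mul_add, Finset.mul_sum, ← mul_assoc, hz, Finset.sum_add_distrib]

lemma coord_sum_b (v : Fin y → k) :
    (coord k x y (∑ q, v q • Bb k x y q)).2.2.1 = v := by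
  funext q
  simp [coord, genOp, Prod.snd_sum, Prod.fst_sum, Pi.single_apply]

/-- Freeness of the radical of `e₂ B`: the expression `∑ α_p z_p` with `z_p ∈ e₁ B` is unique. -/
lemma eq_zero_of_sum_a (z : Fin x → BAlgebra k x y) (hz : ∀ p, Be1 k x y * z p = z p)
    (h : ∑ p, Ba k x y p * z p = 0) (p : Fin x) : z p = 0 := by
  have h2 := congrArg (coord k x y) h
  have h3 : coord k x y (∑ p, Ba k x y p * z p) = ∑ p, genOp k x y (.a p) (coord k x y (z p)) := by
    simp [coord]
  rw [h3] at h2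
  have hc : (coord k x y (z p)).1.1 = 0 := by
    have := congrArg (fun t => t.1.2 p) h2
    simpa [coord, genOp, Prod.fst_sum, Prod.snd_sum, Pi.single_apply] using this
  have hv : ∀ q, (coord k x y (z p)).2.2.1 q = 0 := fun q => by
    have := congrArg (fun t => t.2.2.2 p q) h2
    simpa [coord, genOp, Prod.fst_sum, Prod.snd_sum, Pi.single_apply, ite_apply] using this
  rw [← hz p, e1_mul, hc]
  simp [hv]

/-! ### `Ext` from a two-term projective resolution -/

section TwoTerm

open Limits ZeroObject

variable {C : Type*} [Category* C] [Abelian C]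

/-- The objects of the chain complex `⋯ ⟶ 0 ⟶ P₁ ⟶ P₀`. -/
def twoTermX (P₁ P₀ : C) : ℕ → C
  | 0 => P₀
  | 1 => P₁
  | _ + 2 => 0

/-- The differentials of the chain complex `⋯ ⟶ 0 ⟶ P₁ ⟶ P₀`. -/
def twoTermD {P₁ P₀ : C} (d : P₁ ⟶ P₀) : ∀ i j : ℕ, twoTermX P₁ P₀ i ⟶ twoTermX P₁ P₀ j
  | 1, 0 => d
  | 0, _ => 0
  | 1, _ + 1 => 0
  | _ + 2, _ => 0

/-- The chain complex `⋯ ⟶ 0 ⟶ P₁ ⟶ P₀` with `P₀` in degree `0`. -/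
def twoTerm {P₁ P₀ : C} (d : P₁ ⟶ P₀) : ChainComplex C ℕ where
  X := twoTermX P₁ P₀
  d := twoTermD d
  shape i j h := by
    match i, j with
    | 1, 0 => exact absurd rfl h
    | 0, _ => rfl
    | 1, _ + 1 => rfl
    | _ + 2, _ => rfl
  d_comp_d' i j l _ _ := by
    match i, j, l with
    | 0, _, _ => exact zero_comp
    | 1, 0, _ => exact comp_zero
    | 1, _ + 1, _ => exact zero_comp
    | _ + 2, _, _ => exact zero_comp

/-- A short exact sequence `0 ⟶ P₁ ⟶ P₀ ⟶ X ⟶ 0` with `P₁`, `P₀` projective, viewed as a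
projective resolution of `X`. -/
def twoTermResolution {P₁ P₀ X : C} (d : P₁ ⟶ P₀) (π : P₀ ⟶ X) [Projective P₁] [Projective P₀]
    [Mono d] [Epi π] (w : d ≫ π = 0) (hex : (ShortComplex.mk d π w).Exact) :
    ProjectiveResolution X where
  complex := twoTerm d
  projective n := match n with
    | 0 => ‹Projective P₀›
    | 1 => ‹Projective P₁›
    | _ + 2 => inferInstanceAs (Projective (0 : C))
  π := (ChainComplex.toSingle₀Equiv _ _).symm ⟨π, w⟩
  quasiIso := ⟨fun n => by
    match n with
    | 0 =>
      rw [ChainComplex.quasiIsoAt₀_iff, ShortComplex.quasiIso_iff_of_zeros' _ rfl rfl rfl]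
      have key : ∀ (g : P₀ ⟶ X) (w' : d ≫ g = 0), g = π →
          (ShortComplex.mk d g w').Exact ∧ Epi g := by
        rintro _ _ rfl
        exact ⟨hex, ‹_›⟩
      exact key _ _ (ChainComplex.toSingle₀Equiv_symm_apply_f_zero (C := twoTerm d) π w)
    | 1 =>
      rw [quasiIsoAt_iff_exactAt' (hL := ChainComplex.exactAt_succ_single_obj ..),
        HomologicalComplex.exactAt_iff' _ 2 1 0 (by simp) (by simp)]
      exact (ShortComplex.exact_iff_mono _ rfl).2 ‹Mono d›
    | n + 2 =>
      rw [quasiIsoAt_iff_exactAt' (hL := ChainComplex.exactAt_succ_single_obj ..),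
        HomologicalComplex.exactAt_iff]
      exact ShortComplex.exact_of_isZero_X₂ _ (isZero_zero C)⟩

/-- If every morphism `P₀ ⟶ Y` vanishes on `P₁`, then the complex `Hom(P, Y)` has zero
differentials, so that `Ext` is given by its terms. -/
def extIsoOfZero {R : Type*} [Ring R] [Linear R C] [EnoughProjectives C]
    {P₁ P₀ X : C} (d : P₁ ⟶ P₀) (π : P₀ ⟶ X) [Projective P₁] [Projective P₀]
    [Mono d] [Epi π] (w : d ≫ π = 0) (hex : (ShortComplex.mk d π w).Exact)
    (Y : C) (hY : ∀ φ : P₀ ⟶ Y, d ≫ φ = 0) (n : ℕ) :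
    ((Ext R C n).obj (Opposite.op X)).obj Y ≅ ModuleCat.of R (twoTermX P₁ P₀ n ⟶ Y) :=
  have hd : ∀ i j, ((twoTerm d).linearYonedaObj R Y).d i j = 0 := fun i j => by
    ext (φ : twoTermX P₁ P₀ i ⟶ Y)
    change twoTermD d j i ≫ φ = 0
    match j, i with
    | 1, 0 => exact hY φ
    | 0, _ => exact zero_comp
    | 1, _ + 1 => exact zero_comp
    | _ + 2, _ => exact zero_comp
  (twoTermResolution d π w hex).isoExt n Y ≪≫
    (ShortComplex.HomologyData.ofZeros (((twoTerm d).linearYonedaObj R Y).sc n)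
      (hd _ _) (hd _ _)).left.homologyIso

end TwoTerm

/-! ### The projective resolution of `B / B e₁ B` -/

/-- The right module `uB` is a direct summand of `B`, hence projective, when `u` is idempotent. -/
lemma projective_projAt (u : BAlgebra k x y) (hu : u * u = u) :
    Module.Projective (BAlgebra k x y)ᵐᵒᵖ (projAt k x y u) := by
  have hB : Module.Projective (BAlgebra k x y)ᵐᵒᵖ (BAlgebra k x y) :=
    .of_equiv' (P := BAlgebra k x y) (M := (BAlgebra k x y)ᵐᵒᵖ)
      { (MulOpposite.opAddEquiv (α := BAlgebra k x y)).symm with map_smul' := fun _ _ => rfl }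
  refine .of_split (M := BAlgebra k x y) (projAt k x y u).subtype
    { toFun := fun z => ⟨u * z, show u * (u * z) = u * z by rw [← mul_assoc, hu]⟩
      map_add' := fun a b => Subtype.ext (mul_add u a b)
      map_smul' := fun c a => Subtype.ext (mul_assoc u a c.unop).symm } ?_
  ext z
  exact z.2

/-- The ideal `B e₁ B` as a right submodule. -/
abbrev J : Submodule (BAlgebra k x y)ᵐᵒᵖ (BAlgebra k x y) :=
  (TwoSidedIdeal.span {Be1 k x y} : TwoSidedIdeal (BAlgebra k x y)).rightSubmodule

lemma mem_J_of_eq (u v : BAlgebra k x y) : u * Be1 k x y * v ∈ J k x y :=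
  TwoSidedIdeal.mul_mem_right _ _ _ (TwoSidedIdeal.mul_mem_left _ _ _
    (TwoSidedIdeal.subset_span rfl))

lemma chi_of_mem_J {z : BAlgebra k x y} (hz : z ∈ J k x y) : chi k x y z = 0 := by
  have h : (TwoSidedIdeal.span {Be1 k x y} : TwoSidedIdeal (BAlgebra k x y)) ≤
      TwoSidedIdeal.ker (chi k x y) := by
    rw [TwoSidedIdeal.span_le]
    rintro _ rfl
    exact (TwoSidedIdeal.mem_ker _).2 (chi_e1 k x y)
  exact (TwoSidedIdeal.mem_ker _).1 (h hz)

/-- The embedding `(e₁B)^x → e₂B`, `(z_p) ↦ ∑ α_p z_p`. -/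
def dLin : (Fin x → projAt k x y (Be1 k x y)) →ₗ[(BAlgebra k x y)ᵐᵒᵖ] projAt k x y (Be2 k x y) where
  toFun f := ⟨∑ p, Ba k x y p * (f p : BAlgebra k x y), by
    change Be2 k x y * _ = _
    simp [Finset.mul_sum, ← mul_assoc]⟩
  map_add' f g := Subtype.ext (by simp [mul_add, Finset.sum_add_distrib])
  map_smul' c f := Subtype.ext (by
    change ∑ p, Ba k x y p * ((f p : BAlgebra k x y) * c.unop) =
      (∑ p, Ba k x y p * (f p : BAlgebra k x y)) * c.unop
    simp [Finset.sum_mul, mul_assoc])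

/-- The projection `e₂B ⊆ B → B / B e₁ B`. -/
def piLin : projAt k x y (Be2 k x y) →ₗ[(BAlgebra k x y)ᵐᵒᵖ] (BAlgebra k x y ⧸ J k x y) :=
  (J k x y).mkQ ∘ₗ (projAt k x y (Be2 k x y)).subtype

lemma dLin_injective : Function.Injective (dLin k x y) := by
  rw [injective_iff_map_eq_zero]
  intro f hf
  funext p
  exact Subtype.ext (eq_zero_of_sum_a k x y (fun p => (f p : BAlgebra k x y)) (fun p => (f p).2)
    (congrArg Subtype.val hf) p)

lemma piLin_surjective : Function.Surjective (piLin k x y) := by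
  intro z
  obtain ⟨z, rfl⟩ := (J k x y).mkQ_surjective z
  refine ⟨⟨Be2 k x y * z, show _ * (_ * _) = _ by rw [← mul_assoc, e2_e2]⟩, ?_⟩
  change (J k x y).mkQ (Be2 k x y * z) = (J k x y).mkQ z
  rw [← sub_eq_zero, ← map_sub, ← LinearMap.mem_ker, Submodule.ker_mkQ, ← Submodule.neg_mem_iff]
  have h : -(Be2 k x y * z - z) = 1 * Be1 k x y * z := by
    rw [neg_sub, one_mul, sub_eq_iff_eq_add, ← add_mul, e1_add_e2, one_mul]
  rw [h]
  exact mem_J_of_eq k x y _ _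

lemma piLin_dLin (f) : piLin k x y (dLin k x y f) = 0 := by
  change (J k x y).mkQ (∑ p, Ba k x y p * (f p : BAlgebra k x y)) = 0
  rw [← LinearMap.mem_ker, Submodule.ker_mkQ]
  refine Submodule.sum_mem _ fun p _ => ?_
  rw [← a_e1]
  exact mem_J_of_eq k x y _ _

lemma exists_dLin_eq (z) (hz : piLin k x y z = 0) : ∃ f, dLin k x y f = z := by
  have hz' : (z : BAlgebra k x y) ∈ J k x y := by
    rw [← Submodule.ker_mkQ (J k x y)]
    exact hz
  have hchi := chi_of_mem_J k x y hz'
  refine ⟨fun p => ⟨(coord k x y z).1.2 p • Be1 k x y +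
      ∑ q, (coord k x y z).2.2.2 p q • Bb k x y q, ?_⟩, Subtype.ext ?_⟩
  · change Be1 k x y * _ = _
    simp [mul_add, Finset.mul_sum]
  · exact (e2_mul_of_chi k x y z hchi).symm.trans z.2

/-- The differential of the resolution, as a morphism of right modules. -/
def dHom : ModuleCat.of (BAlgebra k x y)ᵐᵒᵖ (Fin x → projAt k x y (Be1 k x y)) ⟶
    ModuleCat.of (BAlgebra k x y)ᵐᵒᵖ (projAt k x y (Be2 k x y)) :=
  ModuleCat.ofHom (dLin k x y)

/-- The augmentation of the resolution, as a morphism of right modules. -/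
def piHom : ModuleCat.of (BAlgebra k x y)ᵐᵒᵖ (projAt k x y (Be2 k x y)) ⟶
    ModuleCat.of (BAlgebra k x y)ᵐᵒᵖ (BAlgebra k x y ⧸ J k x y) :=
  ModuleCat.ofHom (piLin k x y)

/-- The right module `e₁B`. -/
abbrev P₁ : ModuleCat (BAlgebra k x y)ᵐᵒᵖ :=
  ModuleCat.of (BAlgebra k x y)ᵐᵒᵖ (projAt k x y (Be1 k x y))

/-- `φ(z) = φ(e₂) z` for a morphism `φ` defined on `e₂B`. -/
lemma hom_e2_apply (φ : ModuleCat.of (BAlgebra k x y)ᵐᵒᵖ (projAt k x y (Be2 k x y)) ⟶ P₁ k x y)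
    (z : projAt k x y (Be2 k x y)) :
    (φ.hom z : BAlgebra k x y) = (φ.hom ⟨Be2 k x y, e2_e2 k x y⟩ : BAlgebra k x y) * z := by
  have h : z = MulOpposite.op (z : BAlgebra k x y) •
      (⟨Be2 k x y, e2_e2 k x y⟩ : projAt k x y (Be2 k x y)) := Subtype.ext z.2.symm
  conv_lhs => rw [h, map_smul]
  rfl

/-- A morphism `e₂B ⟶ e₁B` maps `e₂` into the span of the arrows `β_q`. -/
lemma hom_e2_e2 (φ : ModuleCat.of (BAlgebra k x y)ᵐᵒᵖ (projAt k x y (Be2 k x y)) ⟶ P₁ k x y) :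
    ∃ v : Fin y → k, (φ.hom ⟨Be2 k x y, e2_e2 k x y⟩ : BAlgebra k x y) =
      ∑ q, v q • Bb k x y q := by
  refine ⟨_, Eq.trans ?_ (e1_mul_e2 k x y (φ.hom ⟨Be2 k x y, e2_e2 k x y⟩ : BAlgebra k x y))⟩
  have h1 : Be1 k x y * (φ.hom ⟨Be2 k x y, e2_e2 k x y⟩ : BAlgebra k x y) = _ :=
    (φ.hom ⟨Be2 k x y, e2_e2 k x y⟩).2
  rw [h1]
  exact hom_e2_apply k x y φ ⟨Be2 k x y, e2_e2 k x y⟩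

/-- Since `β_q α_p = 0`, every morphism `e₂B ⟶ e₁B` vanishes on the image of the differential. -/
lemma dHom_comp (φ : ModuleCat.of (BAlgebra k x y)ᵐᵒᵖ (projAt k x y (Be2 k x y)) ⟶ P₁ k x y) :
    dHom k x y ≫ φ = 0 := by
  obtain ⟨v, hv⟩ := hom_e2_e2 k x y φ
  refine ModuleCat.hom_ext (LinearMap.ext fun f => Subtype.ext ?_)
  refine (hom_e2_apply k x y φ (dLin k x y f)).trans ?_
  rw [hv]
  change _ * ∑ p, Ba k x y p * (f p : BAlgebra k x y) = 0
  simp [Finset.sum_mul, Finset.mul_sum, ← mul_assoc]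

/-- The `k`-module structure on morphisms given by the `k`-linear structure of the category of
right modules. It takes precedence over the one obtained from a `k`-action on the target. -/
instance homModule (M N : ModuleCat (BAlgebra k x y)ᵐᵒᵖ) : Module k (M ⟶ N) :=
  Linear.homModule M N

/-- The scalar multiplication underlying `homModule`, declared separately so that `c • φ` does not
unfold to the action of `k` on the target. -/
instance homSMul (M N : ModuleCat (BAlgebra k x y)ᵐᵒᵖ) : SMul k (M ⟶ N) :=
  (homModule k x y M N).toSMul

/-- The scalar action of `k` on morphisms of right modules is the one on values. -/
lemma coe_smul_hom {M : ModuleCat (BAlgebra k x y)ᵐᵒᵖ} (c : k) (φ : M ⟶ P₁ k x y) (m : M) :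
    (((c • φ).hom m : projAt k x y (Be1 k x y)) : BAlgebra k x y) =
      c • ((φ.hom m : projAt k x y (Be1 k x y)) : BAlgebra k x y) := by
  change ((φ.hom m : projAt k x y (Be1 k x y)) : BAlgebra k x y) * algebraMap k _ c = _
  rw [← Algebra.commutes, Algebra.smul_def]

/-- The coordinate description of `Hom(e₂B, e₁B)`: a vector `v` gives left multiplication by
`∑ v_q β_q`. -/
def homZero : (Fin y → k) →ₗ[k]
    (ModuleCat.of (BAlgebra k x y)ᵐᵒᵖ (projAt k x y (Be2 k x y)) ⟶ P₁ k x y) where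
  toFun v := ModuleCat.ofHom
    { toFun := fun z => ⟨(∑ q, v q • Bb k x y q) * (z : BAlgebra k x y), by
        change Be1 k x y * _ = _
        simp [Finset.mul_sum, Finset.sum_mul, ← mul_assoc]⟩
      map_add' := fun a b => Subtype.ext (mul_add _ _ _)
      map_smul' := fun c a => Subtype.ext (mul_assoc _ (a : BAlgebra k x y) c.unop).symm }
  map_add' v w := ModuleCat.hom_ext (LinearMap.ext fun z => Subtype.ext (by
    change (∑ q, (v q + w q) • Bb k x y q) * (z : BAlgebra k x y) =
      (∑ q, v q • Bb k x y q) * (z : BAlgebra k x y) + (∑ q, w q • Bb k x y q) * _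
    simp [add_smul, Finset.sum_add_distrib, add_mul]))
  map_smul' c v := ModuleCat.hom_ext (LinearMap.ext fun z => Subtype.ext (by
    refine Eq.trans ?_ (coe_smul_hom k x y c _ z).symm
    change (∑ q, (c * v q) • Bb k x y q) * (z : BAlgebra k x y) =
      c • ((∑ q, v q • Bb k x y q) * (z : BAlgebra k x y))
    simp [mul_smul, ← Finset.smul_sum]))

lemma homZero_bijective : Function.Bijective (homZero k x y) := by
  constructor
  · intro v w h
    have h2 := congrArg (fun φ => ((φ.hom ⟨Be2 k x y, e2_e2 k x y⟩ :
      projAt k x y (Be1 k x y)) : BAlgebra k x y)) h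
    change (∑ q, v q • Bb k x y q) * Be2 k x y = (∑ q, w q • Bb k x y q) * Be2 k x y at h2
    simp only [Finset.sum_mul, smul_mul_assoc, b_e2] at h2
    rw [← coord_sum_b k x y v, h2, coord_sum_b]
  · intro φ
    obtain ⟨v, hv⟩ := hom_e2_e2 k x y φ
    refine ⟨v, ModuleCat.hom_ext (LinearMap.ext fun z => Subtype.ext ?_)⟩
    rw [hom_e2_apply k x y φ z, hv]
    rfl

/-- The coordinate description of `Hom((e₁B)^x, e₁B)`: a vector `c` gives `(z_p) ↦ ∑ c_p z_p`. -/
def homOne : (Fin x → k) →ₗ[k]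
    (ModuleCat.of (BAlgebra k x y)ᵐᵒᵖ (Fin x → projAt k x y (Be1 k x y)) ⟶ P₁ k x y) where
  toFun c := ModuleCat.ofHom
    { toFun := fun f => ⟨∑ p, c p • (f p : BAlgebra k x y), by
        change Be1 k x y * _ = _
        simp [Finset.mul_sum, fun p => show Be1 k x y * (f p : BAlgebra k x y) = _ from (f p).2]⟩
      map_add' := fun a b => Subtype.ext (by simp [Finset.sum_add_distrib])
      map_smul' := fun c' a => Subtype.ext (by
        change ∑ p, c p • ((a p : BAlgebra k x y) * c'.unop) =
          (∑ p, c p • (a p : BAlgebra k x y)) * c'.unop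
        simp [Finset.sum_mul]) }
  map_add' v w := ModuleCat.hom_ext (LinearMap.ext fun f => Subtype.ext (by
    change ∑ p, (v p + w p) • (f p : BAlgebra k x y) =
      ∑ p, v p • (f p : BAlgebra k x y) + ∑ p, w p • (f p : BAlgebra k x y)
    simp [add_smul, Finset.sum_add_distrib]))
  map_smul' c v := ModuleCat.hom_ext (LinearMap.ext fun f => Subtype.ext (by
    refine Eq.trans ?_ (coe_smul_hom k x y c _ f).symm
    change ∑ p, (c * v p) • (f p : BAlgebra k x y) = c • ∑ p, v p • (f p : BAlgebra k x y)
    simp [mul_smul, ← Finset.smul_sum]))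

/-- The `p`-th standard generator of `(e₁B)^x`. -/
def gen (p : Fin x) : Fin x → projAt k x y (Be1 k x y) :=
  Pi.single p ⟨Be1 k x y, e1_e1 k x y⟩

lemma homOne_gen (c : Fin x → k) (p : Fin x) :
    (((homOne k x y c).hom (gen k x y p) : projAt k x y (Be1 k x y)) : BAlgebra k x y) =
      c p • Be1 k x y := by
  change ∑ p', c p' • (gen k x y p p' : BAlgebra k x y) = _
  rw [Finset.sum_eq_single p]
  · simp [gen]
  · intro p' _ h
    simp [gen, h]
  · simp

lemma sum_gen (f : Fin x → projAt k x y (Be1 k x y)) :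
    f = ∑ p, MulOpposite.op (f p : BAlgebra k x y) • gen k x y p := by
  funext p
  rw [Finset.sum_apply, Finset.sum_eq_single p]
  · refine Subtype.ext ?_
    simp only [gen, Pi.smul_apply, Pi.single_eq_same]
    exact (f p).2.symm
  · intro p' _ h
    simp [gen, h.symm]
  · simp

lemma homOne_bijective : Function.Bijective (homOne k x y) := by
  constructor
  · intro v w h
    funext p
    have h2 := homOne_gen k x y v p
    rw [h, homOne_gen] at h2
    simpa [coord, genOp] using (congrArg (fun z => (coord k x y z).1.1) h2).symm
  · intro φ
    have key : ∀ p, ∃ c : k, ((φ.hom (gen k x y p) : projAt k x y (Be1 k x y)) :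
        BAlgebra k x y) = c • Be1 k x y := fun p => by
      refine ⟨_, Eq.trans ?_ (e1_mul_e1 k x y (φ.hom (gen k x y p) : projAt k x y (Be1 k x y)))⟩
      have h1 : Be1 k x y * ((φ.hom (gen k x y p) : projAt k x y (Be1 k x y)) :
        BAlgebra k x y) = _ := (φ.hom (gen k x y p)).2
      have h2 : gen k x y p = MulOpposite.op (Be1 k x y) • gen k x y p := by
        rw [gen, ← Pi.single_smul]
        exact congrArg _ (Subtype.ext (e1_e1 k x y).symm)
      rw [h1]
      conv_lhs => rw [h2, map_smul]
      rfl
    choose c hc using key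
    refine ⟨c, ModuleCat.hom_ext (LinearMap.ext fun f => ?_)⟩
    rw [sum_gen k x y f, map_sum, map_sum]
    refine Finset.sum_congr rfl fun p _ => ?_
    rw [map_smul, map_smul]
    exact congrArg _ (Subtype.ext ((homOne_gen k x y c p).trans (hc p).symm))

/-- `Ext^n(B/Be₁B, e₁B)` is the space of morphisms from the `n`-th term of the resolution
`0 ⟶ (e₁B)^x ⟶ e₂B ⟶ B/Be₁B`. -/
def extIso (n : ℕ) :
    ((Ext k (ModuleCat (BAlgebra k x y)ᵐᵒᵖ) n).obj
      (Opposite.op (ModuleCat.of (BAlgebra k x y)ᵐᵒᵖ (BAlgebra k x y ⧸ J k x y)))).obj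
        (P₁ k x y) ≅
    ModuleCat.of k (twoTermX
      (ModuleCat.of (BAlgebra k x y)ᵐᵒᵖ (Fin x → projAt k x y (Be1 k x y)))
      (ModuleCat.of (BAlgebra k x y)ᵐᵒᵖ (projAt k x y (Be2 k x y))) n ⟶ P₁ k x y) :=
  haveI := projective_projAt k x y _ (e1_e1 k x y)
  haveI := projective_projAt k x y _ (e2_e2 k x y)
  haveI : Module.Projective (BAlgebra k x y)ᵐᵒᵖ (Fin x → projAt k x y (Be1 k x y)) :=
    .of_equiv' (DFinsupp.linearEquivFunOnFintype (R := (BAlgebra k x y)ᵐᵒᵖ)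
      (M := fun _ : Fin x => projAt k x y (Be1 k x y)))
  haveI := (IsProjective.iff_projective (R := (BAlgebra k x y)ᵐᵒᵖ)
    (Fin x → projAt k x y (Be1 k x y))).1 inferInstance
  haveI := (IsProjective.iff_projective (R := (BAlgebra k x y)ᵐᵒᵖ)
    (projAt k x y (Be2 k x y))).1 inferInstance
  haveI : Mono (dHom k x y) := (ModuleCat.mono_iff_injective _).2 (dLin_injective k x y)
  haveI : Epi (piHom k x y) := (ModuleCat.epi_iff_surjective _).2 (piLin_surjective k x y)
  extIsoOfZero (dHom k x y) (piHom k x y)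
    (ModuleCat.hom_ext (LinearMap.ext (piLin_dLin k x y)))
    ((ShortComplex.moduleCat_exact_iff _).2 (exists_dLin_eq k x y)) _ (dHom_comp k x y) n

end BAlg

/-- STATEMENT 7: `dim Hom_B(B/Be₁B, e₁B) = y`, `dim Ext¹_B(B/Be₁B, e₁B) = x` and
`Ext^p_B(B/Be₁B, e₁B) = 0` for `p ≥ 2`, for right `B(x,y)`-modules
(`Hom = Ext⁰`, and `B/Be₁B` is the quotient of the right regular module by the
two-sided ideal `Be₁B`). -/
theorem BAlgebra_ext_from_quotient_to_e1B (k : Type) [Field k] (x y : ℕ) :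
    Module.finrank k
      (((Ext k (ModuleCat (BAlgebra k x y)ᵐᵒᵖ) 0).obj
          (Opposite.op (ModuleCat.of (BAlgebra k x y)ᵐᵒᵖ
            (BAlgebra k x y ⧸
              (TwoSidedIdeal.span {Be1 k x y} :
                TwoSidedIdeal (BAlgebra k x y)).rightSubmodule)))).obj
        (ModuleCat.of (BAlgebra k x y)ᵐᵒᵖ (projAt k x y (Be1 k x y)))) = y ∧
    Module.finrank k
      (((Ext k (ModuleCat (BAlgebra k x y)ᵐᵒᵖ) 1).obj
          (Opposite.op (ModuleCat.of (BAlgebra k x y)ᵐᵒᵖ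
            (BAlgebra k x y ⧸
              (TwoSidedIdeal.span {Be1 k x y} :
                TwoSidedIdeal (BAlgebra k x y)).rightSubmodule)))).obj
        (ModuleCat.of (BAlgebra k x y)ᵐᵒᵖ (projAt k x y (Be1 k x y)))) = x ∧
    ∀ p : ℕ, 2 ≤ p →
      Subsingleton
        (((Ext k (ModuleCat (BAlgebra k x y)ᵐᵒᵖ) p).obj
            (Opposite.op (ModuleCat.of (BAlgebra k x y)ᵐᵒᵖ
              (BAlgebra k x y ⧸
                (TwoSidedIdeal.span {Be1 k x y} :
                  TwoSidedIdeal (BAlgebra k x y)).rightSubmodule)))).obj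
          (ModuleCat.of (BAlgebra k x y)ᵐᵒᵖ (projAt k x y (Be1 k x y)))) := by
  refine ⟨?_, ?_, ?_⟩
  · refine (BAlg.extIso k x y 0).toLinearEquiv.finrank_eq.trans ?_
    refine (LinearEquiv.ofBijective _ (BAlg.homZero_bijective k x y)).finrank_eq.symm.trans ?_
    simp
  · refine (BAlg.extIso k x y 1).toLinearEquiv.finrank_eq.trans ?_
    refine (LinearEquiv.ofBijective _ (BAlg.homOne_bijective k x y)).finrank_eq.symm.trans ?_
    simp
  · intro p hp
    obtain ⟨n, rfl⟩ := Nat.exists_eq_add_of_le' hp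
    refine (BAlg.extIso k x y (n + 2)).toLinearEquiv.toEquiv.subsingleton_congr.2 ?_
    exact ⟨fun f g => (Limits.isZero_zero _).eq_of_src f g⟩

end
end

section
/- For every n ≥ 0 and all sequences x, y of positive integers, the global dimension of A_n(x,y) equals n: for all right A_n(x,y)-modules M, N and all p > n one has Ext^p_{A_n(x,y)}(M, N) = 0, and there exist right A_n(x,y)-modules M, N with Ext^n_{A_n(x,y)}(M, N) ≠ 0. -/
/-!
Left modules over the opposite algebra `R` of `A_n(x,y)` are the right `A_n(x,y)`-modules. The arrows
are ordered linearly as `α₁, β₁, α₂, β₂, …`, with levels `2, 3, 4, 5, …` up to `n + 1`, and the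
relations say that a product of arrows in `R` vanishes unless, from right to left, the levels
strictly increase with alternating parities. So `R` has a basis of words in the arrows.

For `t ≥ 0` let `M_t` be the module spanned by the words that can stand on a bottom of level `t`,
the arrows acting by concatenation. For `t = 0, 1` this is the indecomposable projective module
`P_t` of a vertex. In general `M_t` is the quotient of `P_{t % 2}` by the words whose bottom arrow
`v` has level less than `t`, and this kernel is the direct sum of the modules `M_{lev v}`, where
`2 ≤ lev v < t` and `lev v` and `t` have different parities. The sum is empty for `t ≤ 2`, so `M_t`
is projective then, and induction gives `pd M_t ≤ d` for `t ≤ d + 2` (`pd_X`). These statements are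
proved for the sums of modules `M_t` over a family of levels, called word modules below, which
are closed under the formation of syzygies.

* Upper bound: no arrow acts on `M_{n+1}` and `M_{n+2}`, so these are the two simple modules, and
  every semisimple module is a sum of copies of them, hence has projective dimension at most `n`.
  An arbitrary module has a finite filtration with semisimple subquotients (`pd_of_level`), so
  the same bound holds for it (`pd_le`).
* Lower bound: for `d ≤ n` one has `pd M_{d+2} ≥ d` (`not_pd_MX`). As all `x_i` and `y_i` are
  positive, there is an arrow of level `d + 1` if `d ≥ 1`, so the syzygy of `M_{d+2}` has the direct
  summand `M_{d+1}`, and one concludes by induction; the case `d = 1` says that the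
  projective cover of `M_3` does not split, its kernel being nonzero and contained in the radical.
-/

/-!
Statement 10: the global dimension of `A_n(x,y)` equals `n`: `Ext^p(M,N) = 0` for all
right `A_n(x,y)`-modules `M, N` and all `p > n`, and `Ext^n(M,N) ≠ 0` for some `M, N`.
-/

noncomputable section
set_option linter.unusedSectionVars false

open CategoryTheory

/-- The generators of the path algebra of the quiver of `A_n(x,y)`: trivial paths `e₁`, `e₂`,
arrows `a i j = α_{i+1,j+1} : 1 → 2` for `i < ⌊(n+1)/2⌋`, `j < x_{i+1}`, and arrows
`b i j = β_{i+1,j+1} : 2 → 1` for `i < ⌊n/2⌋`, `j < y_{i+1}`.  (The sequences of positive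
integers `x = (x₁, x₂, …)` and `y = (y₁, y₂, …)` are encoded as functions `ℕ → ℕ` with
`x i = x_{i+1}` and `y i = y_{i+1}`.) -/
inductive AGen (x y : ℕ → ℕ) (n : ℕ) : Type
  | e1 : AGen x y n
  | e2 : AGen x y n
  | a (i : Fin ((n + 1) / 2)) (j : Fin (x i)) : AGen x y n
  | b (i : Fin (n / 2)) (j : Fin (y i)) : AGen x y n

/-- The relations defining `A_n(x,y)` as a quotient of the free algebra on `AGen x y n`:
the path algebra relations (products are written in composition order: `u * v` means
"first traverse `v`, then `u`") together with the relations `α_{i,j} β_{i',j'} = 0`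
(i.e. `a i j * b i' j' = 0`) for `i' < i`, and `β_{i',j'} α_{i,j} = 0`
(i.e. `b i' j' * a i j = 0`) for `i ≤ i'`. -/
inductive ARel (k : Type) [Field k] (x y : ℕ → ℕ) (n : ℕ) :
    FreeAlgebra k (AGen x y n) → FreeAlgebra k (AGen x y n) → Prop
  | idem1 : ARel k x y n (FreeAlgebra.ι k AGen.e1 * FreeAlgebra.ι k AGen.e1)
      (FreeAlgebra.ι k AGen.e1)
  | idem2 : ARel k x y n (FreeAlgebra.ι k AGen.e2 * FreeAlgebra.ι k AGen.e2)
      (FreeAlgebra.ι k AGen.e2)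
  | orth12 : ARel k x y n (FreeAlgebra.ι k AGen.e1 * FreeAlgebra.ι k AGen.e2) 0
  | orth21 : ARel k x y n (FreeAlgebra.ι k AGen.e2 * FreeAlgebra.ι k AGen.e1) 0
  | sum : ARel k x y n (FreeAlgebra.ι k AGen.e1 + FreeAlgebra.ι k AGen.e2) 1
  | a_tgt (i) (j) : ARel k x y n (FreeAlgebra.ι k AGen.e2 * FreeAlgebra.ι k (AGen.a i j))
      (FreeAlgebra.ι k (AGen.a i j))
  | a_src (i) (j) : ARel k x y n (FreeAlgebra.ι k (AGen.a i j) * FreeAlgebra.ι k AGen.e1)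
      (FreeAlgebra.ι k (AGen.a i j))
  | b_tgt (i) (j) : ARel k x y n (FreeAlgebra.ι k AGen.e1 * FreeAlgebra.ι k (AGen.b i j))
      (FreeAlgebra.ι k (AGen.b i j))
  | b_src (i) (j) : ARel k x y n (FreeAlgebra.ι k (AGen.b i j) * FreeAlgebra.ι k AGen.e2)
      (FreeAlgebra.ι k (AGen.b i j))
  | ab (i : Fin ((n + 1) / 2)) (j : Fin (x i)) (i' : Fin (n / 2)) (j' : Fin (y i'))
      (h : (i' : ℕ) < (i : ℕ)) :
      ARel k x y n (FreeAlgebra.ι k (AGen.a i j) * FreeAlgebra.ι k (AGen.b i' j')) 0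
  | ba (i : Fin ((n + 1) / 2)) (j : Fin (x i)) (i' : Fin (n / 2)) (j' : Fin (y i'))
      (h : (i : ℕ) ≤ (i' : ℕ)) :
      ARel k x y n (FreeAlgebra.ι k (AGen.b i' j') * FreeAlgebra.ι k (AGen.a i j)) 0

/-- The algebra `A_n(x,y)`. -/
def AAlgebra (k : Type) [Field k] (x y : ℕ → ℕ) (n : ℕ) : Type := RingQuot (ARel k x y n)

instance (k : Type) [Field k] (x y : ℕ → ℕ) (n : ℕ) : Ring (AAlgebra k x y n) :=
  inferInstanceAs (Ring (RingQuot (ARel k x y n)))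

instance (k : Type) [Field k] (x y : ℕ → ℕ) (n : ℕ) : Algebra k (AAlgebra k x y n) :=
  inferInstanceAs (Algebra k (RingQuot (ARel k x y n)))

variable (k : Type) [Field k] (x y : ℕ → ℕ) (n : ℕ)

/-- The idempotent `e₁ ∈ A_n(x,y)`. -/
def Ae1 : AAlgebra k x y n := RingQuot.mkAlgHom k (ARel k x y n) (FreeAlgebra.ι k AGen.e1)

/-- The idempotent `e₂ ∈ A_n(x,y)`. -/
def Ae2 : AAlgebra k x y n := RingQuot.mkAlgHom k (ARel k x y n) (FreeAlgebra.ι k AGen.e2)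

/-- The arrow `α_{i+1,j+1} ∈ A_n(x,y)`. -/
def Aalpha (i : Fin ((n + 1) / 2)) (j : Fin (x i)) : AAlgebra k x y n :=
  RingQuot.mkAlgHom k (ARel k x y n) (FreeAlgebra.ι k (AGen.a i j))

/-- The arrow `β_{i+1,j+1} ∈ A_n(x,y)`. -/
def Abeta (i : Fin (n / 2)) (j : Fin (y i)) : AAlgebra k x y n :=
  RingQuot.mkAlgHom k (ARel k x y n) (FreeAlgebra.ι k (AGen.b i j))

/-! ### The two definitions of Ext in Mathlib -/

universe u v w

section ExtComparison

variable {k : Type v} [Ring k] {C : Type u} [Category.{v} C] [Abelian C] [Linear k C]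
  [EnoughProjectives C] [HasExt.{w} C]

/-- If the `Ext` functor defined by derived functors vanishes, so does the group `Abelian.Ext`: both
are the cohomology of `Hom(P, N)` for a projective resolution `P` of `M`. -/
lemma subsingleton_abelianExt_of_ext {M N : C} {p : ℕ}
    (h : Subsingleton (((_root_.Ext k C p).obj (Opposite.op M)).obj N)) :
    Subsingleton (Abelian.Ext.{w} M N p) := by
  let P := projectiveResolution M
  have h0 : Limits.IsZero (((_root_.Ext k C p).obj (Opposite.op M)).obj N) :=
    ModuleCat.isZero_of_subsingleton _
  have h1 := h0.of_iso (P.isoExt (R := k) p N).symm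
  rw [← HomologicalComplex.exactAt_iff_isZero_homology, HomologicalComplex.exactAt_iff,
    ShortComplex.moduleCat_exact_iff] at h1
  refine subsingleton_of_forall_eq 0 fun e => ?_
  obtain ⟨f, hf, rfl⟩ := P.extMk_surjective e (p + 1) rfl
  obtain ⟨g, hg⟩ := h1 f (by
    change P.complex.d ((ComplexShape.up ℕ).next p) p ≫ f = 0
    rw [show (ComplexShape.up ℕ).next p = p + 1 by simp]; exact hf)
  obtain ⟨g', hg'⟩ : ∃ g : P.complex.X ((ComplexShape.up ℕ).prev p) ⟶ N,
    P.complex.d p ((ComplexShape.up ℕ).prev p) ≫ g = f := ⟨g, hg⟩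
  cases p with
  | zero =>
    rw [P.complex.shape _ _ (by simp), Limits.zero_comp] at hg'
    subst hg'
    simp
  | succ p =>
    rw [P.extMk_eq_zero_iff _ _ _ _ p rfl]
    have : (ComplexShape.up ℕ).prev (p + 1) = p := by simp
    revert g' hg'
    rw [this]
    exact fun g hg => ⟨g, hg⟩

/-- The converse of `subsingleton_abelianExt_of_ext`, in positive degrees. -/
lemma subsingleton_ext_of_abelianExt {M N : C} {p : ℕ}
    (h : Subsingleton (Abelian.Ext.{w} M N (p + 1))) :
    Subsingleton (((_root_.Ext k C (p + 1)).obj (Opposite.op M)).obj N) := by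
  let P := projectiveResolution M
  refine ModuleCat.subsingleton_of_isZero ?_
  refine Limits.IsZero.of_iso ?_ (P.isoExt (R := k) (p + 1) N)
  rw [← HomologicalComplex.exactAt_iff_isZero_homology,
    HomologicalComplex.exactAt_iff' _ p (p + 1) (p + 2) (by simp) (by simp),
    ShortComplex.moduleCat_exact_iff]
  intro f hf
  obtain ⟨g, hg⟩ := (P.extMk_eq_zero_iff f (p + 2) rfl hf p rfl).1 (Subsingleton.elim _ _)
  exact ⟨g, hg⟩

end ExtComparison

/-! ### Generators and relations -/

/-- The level of a generator.  The arrows are linearly ordered as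
`α₁,·, β₁,·, α₂,·, β₂,·, …`, with levels `2, 3, 4, 5, …`; the idempotents `e₁` and `e₂` are
treated as additional generators of levels `0` and `1`.  Thus a generator is an arrow exactly
when its level is at least `2`, and the parity of the level of an arrow determines its source. -/
def AGen.lev {x y : ℕ → ℕ} {n : ℕ} : AGen x y n → ℕ
  | .e1 => 0
  | .e2 => 1
  | .a i _ => 2 * i + 2
  | .b i _ => 2 * i + 3

variable {k x y n}

lemma AGen.lev_le (g : AGen x y n) (hg : 2 ≤ g.lev) : g.lev ≤ n + 1 := by
  rcases g with _ | _ | ⟨i, j⟩ | ⟨i, j⟩ <;> simp only [AGen.lev] at hg ⊢ <;> omega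

lemma AGen.exists_lev (hx : ∀ i, 0 < x i) (hy : ∀ i, 0 < y i) (t : ℕ) (h2 : 2 ≤ t)
    (ht : t ≤ n + 1) : ∃ g : AGen x y n, g.lev = t := by
  obtain h | h := Nat.even_or_odd' t |>.choose_spec
  · exact ⟨.a ⟨t / 2 - 1, by omega⟩ ⟨0, hx _⟩, by simp only [AGen.lev]; omega⟩
  · exact ⟨.b ⟨t / 2 - 1, by omega⟩ ⟨0, hy _⟩, by simp only [AGen.lev]; omega⟩

variable (k x y n) in
/-- The opposite algebra of `A_n(x,y)`, whose left modules are the right `A_n(x,y)`-modules. -/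
abbrev AOp : Type := (AAlgebra k x y n)ᵐᵒᵖ

variable (k x y n) in
/-- The quotient map from the free algebra onto `A_n(x,y)`. -/
def toA : FreeAlgebra k (AGen x y n) →ₐ[k] AAlgebra k x y n :=
  RingQuot.mkAlgHom k (ARel k x y n)

lemma toA_rel {r s : FreeAlgebra k (AGen x y n)} (H : ARel k x y n r s) :
    toA k x y n r = toA k x y n s :=
  RingQuot.mkAlgHom_rel k H

lemma toA_surjective : Function.Surjective (toA k x y n) :=
  RingQuot.mkAlgHom_surjective k (ARel k x y n)

variable (k) in
/-- The image of a generator in the opposite algebra. -/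
def gen (g : AGen x y n) : AOp k x y n :=
  MulOpposite.op (toA k x y n (FreeAlgebra.ι k g))

variable (k x y n) in
/-- The idempotent of the opposite algebra attached to the parity of `t`: it is `e₁` for even `t`
and `e₂` for odd `t`. -/
def idem (t : ℕ) : AOp k x y n := if t % 2 = 0 then gen k .e1 else gen k .e2

lemma gen_mul_gen_eq {g h : AGen x y n} {r : FreeAlgebra k (AGen x y n)}
    (H : ARel k x y n (FreeAlgebra.ι k h * FreeAlgebra.ι k g) r) :
    gen k g * gen k h = MulOpposite.op (toA k x y n r) := by
  rw [gen, gen, ← MulOpposite.op_mul]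
  congr 1
  rw [← toA_rel H, map_mul]

lemma gen_mul_gen_eq_zero {g h : AGen x y n}
    (H : ARel k x y n (FreeAlgebra.ι k h * FreeAlgebra.ι k g) 0) : gen k g * gen k h = 0 := by
  rw [gen_mul_gen_eq H, map_zero, MulOpposite.op_zero]

lemma gen_e1_add_gen_e2 : gen k (.e1 : AGen x y n) + gen k .e2 = 1 := by
  rw [gen, gen, ← MulOpposite.op_add]
  have := toA_rel (ARel.sum (k := k) (x := x) (y := y) (n := n))
  rw [map_add, map_one] at this
  exact congrArg MulOpposite.op this

lemma idem_add_idem (t : ℕ) : idem k x y n t + idem k x y n (t + 1) = 1 := by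
  rcases Nat.mod_two_eq_zero_or_one t with h | h
  · rw [idem, idem, if_pos h, if_neg (by omega), gen_e1_add_gen_e2]
  · rw [idem, idem, if_neg (by omega), if_pos (by omega), add_comm, gen_e1_add_gen_e2]

lemma idem_mul_idem {s t : ℕ} (h : s % 2 = t % 2) :
    idem k x y n s * idem k x y n t = idem k x y n t := by
  rw [idem, idem, h]
  split_ifs
  · exact gen_mul_gen_eq .idem1
  · exact gen_mul_gen_eq .idem2

lemma idem_mul_idem_of_ne {s t : ℕ} (h : s % 2 ≠ t % 2) :
    idem k x y n s * idem k x y n t = 0 := by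
  rw [idem, idem]
  split_ifs
  · omega
  · exact gen_mul_gen_eq_zero .orth21
  · exact gen_mul_gen_eq_zero .orth12
  · omega

lemma idem_mul_gen (g : AGen x y n) : idem k x y n g.lev * gen k g = gen k g := by
  rcases g with _ | _ | ⟨i, j⟩ | ⟨i, j⟩
  · exact gen_mul_gen_eq .idem1
  · exact gen_mul_gen_eq .idem2
  · rw [idem, if_pos (by simp only [AGen.lev]; omega)]
    exact gen_mul_gen_eq (.a_src i j)
  · rw [idem, if_neg (by simp only [AGen.lev]; omega)]
    exact gen_mul_gen_eq (.b_src i j)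

lemma gen_mul_idem {g : AGen x y n} (hg : 2 ≤ g.lev) :
    gen k g * idem k x y n (g.lev + 1) = gen k g := by
  rcases g with _ | _ | ⟨i, j⟩ | ⟨i, j⟩
  · simp [AGen.lev] at hg
  · simp [AGen.lev] at hg
  · rw [idem, if_neg (by simp only [AGen.lev]; omega)]
    exact gen_mul_gen_eq (.a_tgt i j)
  · rw [idem, if_pos (by simp only [AGen.lev]; omega)]
    exact gen_mul_gen_eq (.b_tgt i j)

lemma gen_mul_idem_eq_zero {g : AGen x y n} (hg : 2 ≤ g.lev) {t : ℕ} (h : g.lev % 2 = t % 2) :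
    gen k g * idem k x y n t = 0 := by
  rw [← gen_mul_idem hg, mul_assoc, idem_mul_idem_of_ne (by omega), mul_zero]

/-- A product of two arrows vanishes unless the levels strictly increase (and alternate in
parity). -/
lemma gen_mul_gen_of_le {g h : AGen x y n} (hg : 2 ≤ g.lev) (hh : 2 ≤ h.lev)
    (hgh : g.lev ≤ h.lev) : gen k g * gen k h = 0 := by
  by_cases hp : g.lev % 2 = h.lev % 2
  · rw [← idem_mul_gen h, ← mul_assoc, gen_mul_idem_eq_zero hg hp, zero_mul]
  · rcases g with _ | _ | ⟨i, j⟩ | ⟨i, j⟩ <;> rcases h with _ | _ | ⟨i', j'⟩ | ⟨i', j'⟩ <;>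
      simp only [AGen.lev] at hg hh hgh hp <;> try omega
    · exact gen_mul_gen_eq_zero (.ba _ _ _ _ (by omega))
    · exact gen_mul_gen_eq_zero (.ab _ _ _ _ (by omega))

lemma aop_induction {C : AOp k x y n → Prop} (halg : ∀ c, C (algebraMap k _ c))
    (hgen : ∀ g, C (gen k g)) (hadd : ∀ r s, C r → C s → C (r + s))
    (hmul : ∀ r s, C r → C s → C (r * s)) (r : AOp k x y n) : C r := by
  obtain ⟨z, hz⟩ := toA_surjective r.unop
  have hr : r = MulOpposite.op (toA k x y n z) :=
    MulOpposite.unop_injective hz.symm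
  rw [hr]
  clear hr hz
  induction z using FreeAlgebra.induction with
  | grade0 c =>
    rw [AlgHom.commutes]
    exact halg c
  | grade1 g => exact hgen g
  | mul a b ha hb => rw [map_mul]; exact hmul _ _ hb ha
  | add a b ha hb => rw [map_add]; exact hadd _ _ ha hb

/-! ### Word modules -/

/-- The level of the top of a word standing on a bottom of level `t`. -/
def hd (t : ℕ) : List (AGen x y n) → ℕ
  | [] => t
  | u :: _ => u.lev

/-- A list of arrows is a valid word on a bottom of level `t` if, read from right to left, the
levels strictly increase from `t` with alternating parities. -/
def Valid (t : ℕ) : List (AGen x y n) → Prop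
  | [] => True
  | u :: w => hd t w < u.lev ∧ hd t w % 2 ≠ u.lev % 2 ∧ 2 ≤ u.lev ∧ Valid t w

lemma hd_append (t : ℕ) (v : AGen x y n) (w : List (AGen x y n)) :
    hd t (w ++ [v]) = hd v.lev w := by
  cases w <;> rfl

lemma valid_append (t : ℕ) (v : AGen x y n) (w : List (AGen x y n)) :
    Valid t (w ++ [v]) ↔
      Valid v.lev w ∧ t < v.lev ∧ t % 2 ≠ v.lev % 2 ∧ 2 ≤ v.lev := by
  induction w with
  | nil => simp [Valid, hd]
  | cons u w ih =>
    rw [List.cons_append, Valid, Valid, ih, hd_append]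
    tauto

lemma Valid.mod_two {t : ℕ} {w : List (AGen x y n)} (h : Valid t w) : Valid (t % 2) w := by
  induction w using List.reverseRecOn with
  | nil => trivial
  | append_singleton w v _ =>
    rw [valid_append] at h ⊢
    exact ⟨h.1, by omega, by omega, h.2.2.2⟩

lemma Valid.two_le {t : ℕ} {w : List (AGen x y n)} (h : Valid t w) : ∀ u ∈ w, 2 ≤ u.lev := by
  induction w with
  | nil => simp
  | cons u w ih =>
    rintro v (_ | ⟨_, hv⟩)
    · exact h.2.2.1
    · exact ih h.2.2.2 v hv

section WordModule

variable (k x y n) in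
/-- The word module of a family of levels `lv : T → ℕ`: the vector space on the pairs `(w, τ)`
with `w` a valid word on a bottom of level `lv τ`.  It is the direct sum over `τ` of right
`A_n(x,y)`-modules `M_{lv τ}`, where `M_t` is the right ideal `u A_n(x,y)` generated by an arrow
`u` of level `t` for `2 ≤ t ≤ n + 1`, the indecomposable projective module `e₁ A_n(x,y)`, resp.
`e₂ A_n(x,y)`, for `t = 0, 1`, and a simple module for `t ≥ n + 1`. -/
def X {T : Type} (lv : T → ℕ) : Type :=
  {p : List (AGen x y n) × T // Valid (lv p.2) p.1} →₀ k

variable {T : Type} (lv : T → ℕ)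

instance : AddCommGroup (X k x y n lv) := inferInstanceAs (AddCommGroup (_ →₀ k))

instance : Module k (X k x y n lv) := inferInstanceAs (Module k (_ →₀ k))

open Classical in
variable (k) in
/-- The basis vector of a word, which is `0` by convention if the word is not valid. -/
def bs (w : List (AGen x y n)) (τ : T) : X k x y n lv :=
  if h : Valid (lv τ) w then Finsupp.single ⟨(w, τ), h⟩ 1 else 0

variable {lv}

lemma bs_of_not {w : List (AGen x y n)} {τ : T} (h : ¬ Valid (lv τ) w) : bs k lv w τ = 0 :=
  dif_neg h

lemma bs_of_valid {w : List (AGen x y n)} {τ : T} (h : Valid (lv τ) w) :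
    bs k lv w τ = Finsupp.single ⟨(w, τ), h⟩ (1 : k) :=
  dif_pos h

lemma X_induction {C : X k x y n lv → Prop} (h0 : C 0) (hadd : ∀ a b, C a → C b → C (a + b))
    (hbs : ∀ (c : k) w τ, Valid (lv τ) w → C (c • bs k lv w τ)) (a : X k x y n lv) : C a := by
  refine Finsupp.induction_linear (motive := C) a h0 (fun f g => hadd f g) ?_
  rintro ⟨⟨w, τ⟩, h⟩ c
  have := hbs c w τ h
  rw [bs_of_valid h] at this
  erw [Finsupp.smul_single, smul_eq_mul, mul_one] at this
  exact this

variable (lv) in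
/-- The linear map with prescribed values on the valid words. -/
def ofWords {N : Type} [AddCommGroup N] [Module k N] (m : List (AGen x y n) → T → N) :
    X k x y n lv →ₗ[k] N :=
  Finsupp.linearCombination k (fun p : {p : List (AGen x y n) × T // Valid (lv p.2) p.1} =>
    m p.1.1 p.1.2)

lemma ofWords_bs {N : Type} [AddCommGroup N] [Module k N] {m : List (AGen x y n) → T → N}
    {w : List (AGen x y n)} {τ : T} (h : Valid (lv τ) w) :
    ofWords lv m (bs k lv w τ) = m w τ := by
  rw [bs_of_valid h, ofWords]
  erw [Finsupp.linearCombination_single, one_smul]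

variable (k lv) in
/-- The action of a generator: an arrow is added on top of a word, and an idempotent selects
the words whose top has the corresponding parity. -/
def act (g : AGen x y n) : X k x y n lv →ₗ[k] X k x y n lv :=
  ofWords lv fun w τ => if 2 ≤ g.lev then bs k lv (g :: w) τ
    else if hd (lv τ) w % 2 = g.lev % 2 then bs k lv w τ else 0

lemma act_arrow {g : AGen x y n} (hg : 2 ≤ g.lev) (w : List (AGen x y n)) (τ : T) :
    act k lv g (bs k lv w τ) = bs k lv (g :: w) τ := by
  by_cases h : Valid (lv τ) w
  · rw [act, ofWords_bs h, if_pos hg]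
  · rw [bs_of_not h, map_zero, bs_of_not (w := g :: w) (fun H => h H.2.2.2)]

lemma act_idem {g : AGen x y n} (hg : ¬ 2 ≤ g.lev) (w : List (AGen x y n)) (τ : T) :
    act k lv g (bs k lv w τ) = if hd (lv τ) w % 2 = g.lev % 2 then bs k lv w τ else 0 := by
  by_cases h : Valid (lv τ) w
  · rw [act, ofWords_bs h, if_neg hg]
  · simp [bs_of_not h]

lemma X_ext {N : Type} [AddCommGroup N] [Module k N] {f g : X k x y n lv →ₗ[k] N}
    (h : ∀ w τ, Valid (lv τ) w → f (bs k lv w τ) = g (bs k lv w τ)) : f = g := by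
  ext a
  induction a using X_induction with
  | h0 => simp
  | hadd a b ha hb => simp [ha, hb]
  | hbs c w τ hw => simp [h w τ hw]

variable (k lv) in
/-- The action of the free algebra on a word module. -/
def freeAct : FreeAlgebra k (AGen x y n) →ₐ[k] (Module.End k (X k x y n lv))ᵐᵒᵖ :=
  FreeAlgebra.lift k fun g => MulOpposite.op (act k lv g)

lemma freeAct_ι (g : AGen x y n) :
    freeAct k lv (FreeAlgebra.ι k g) = MulOpposite.op (act k lv g) :=
  FreeAlgebra.lift_ι_apply _ _

lemma freeAct_rel {r s : FreeAlgebra k (AGen x y n)} (H : ARel k x y n r s) :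
    freeAct k lv r = freeAct k lv s := by
  have hbs0 : ∀ (i j : AGen x y n) (w : List (AGen x y n)) (τ : T),
      (j.lev ≤ i.lev) → bs k lv (j :: i :: w) τ = 0 := fun i j w τ h =>
    bs_of_not fun H => by simp only [Valid, hd] at H; omega
  induction H <;> simp only [map_mul, map_add, map_one, map_zero, freeAct_ι] <;>
    apply MulOpposite.unop_injective <;>
    simp only [MulOpposite.unop_mul, MulOpposite.unop_op, MulOpposite.unop_add,
      MulOpposite.unop_one, MulOpposite.unop_zero] <;>
    refine X_ext fun w τ hw => ?_ <;>
    simp only [Module.End.mul_apply, LinearMap.add_apply, Module.End.one_apply,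
      LinearMap.zero_apply]
  case idem1 => rw [act_idem (by simp [AGen.lev])]; split_ifs <;> simp [act_idem, AGen.lev, *]
  case idem2 => rw [act_idem (by simp [AGen.lev])]; split_ifs <;> simp [act_idem, AGen.lev, *]
  case orth12 =>
    rw [act_idem (by simp [AGen.lev])]; split_ifs <;> simp_all [act_idem, AGen.lev]
  case orth21 =>
    rw [act_idem (by simp [AGen.lev])]; split_ifs <;> simp_all [act_idem, AGen.lev]
  case sum =>
    rw [act_idem (by simp [AGen.lev]), act_idem (by simp [AGen.lev])]
    rcases Nat.mod_two_eq_zero_or_one (hd (lv τ) w) with h | h <;> simp [AGen.lev, h]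
  case a_tgt i j =>
    rw [act_idem (by simp [AGen.lev]), act_arrow (by simp [AGen.lev])]
    split_ifs with h
    · rw [act_arrow (by simp [AGen.lev])]
    · rw [map_zero, bs_of_not fun H => ?_]
      simp only [Valid, AGen.lev] at H h
      omega
  case a_src i j =>
    rw [act_arrow (by simp [AGen.lev]), act_idem (by simp [AGen.lev]), if_pos]
    simp [hd, AGen.lev]
  case b_tgt i j =>
    rw [act_idem (by simp [AGen.lev]), act_arrow (by simp [AGen.lev])]
    split_ifs with h
    · rw [act_arrow (by simp [AGen.lev])]
    · rw [map_zero, bs_of_not fun H => ?_]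
      simp only [Valid, AGen.lev] at H h
      omega
  case b_src i j =>
    rw [act_arrow (by simp [AGen.lev]), act_idem (by simp [AGen.lev]), if_pos]
    simp only [hd, AGen.lev]; omega
  case ab i j i' j' h =>
    rw [act_arrow (by simp [AGen.lev]), act_arrow (by simp [AGen.lev]), hbs0]
    simp only [AGen.lev]; omega
  case ba i j i' j' h =>
    rw [act_arrow (by simp [AGen.lev]), act_arrow (by simp [AGen.lev]), hbs0]
    simp only [AGen.lev]; omega

variable (k x y n lv) in
/-- The action of the opposite algebra of `A_n(x,y)` on a word module. -/
def opAct : AOp k x y n →ₐ[k] Module.End k (X k x y n lv) :=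
  AlgHom.opComm (RingQuot.liftAlgHom k ⟨freeAct k lv, fun _ _ H => freeAct_rel H⟩ :
    AAlgebra k x y n →ₐ[k] (Module.End k (X k x y n lv))ᵐᵒᵖ)

lemma opAct_gen (g : AGen x y n) : opAct k x y n lv (gen k g) = act k lv g := by
  have : (RingQuot.liftAlgHom k ⟨freeAct k lv, fun _ _ H => freeAct_rel H⟩ :
      AAlgebra k x y n →ₐ[k] (Module.End k (X k x y n lv))ᵐᵒᵖ) (toA k x y n (FreeAlgebra.ι k g))
      = MulOpposite.op (act k lv g) :=
    (RingQuot.liftAlgHom_mkAlgHom_apply k _ _ _).trans (freeAct_ι g)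
  exact congrArg MulOpposite.unop this

instance : Module (AOp k x y n) (X k x y n lv) :=
  Module.compHom _ (opAct k x y n lv).toRingHom

lemma smul_def' (r : AOp k x y n) (a : X k x y n lv) : r • a = opAct k x y n lv r a := rfl

instance : IsScalarTower k (AOp k x y n) (X k x y n lv) where
  smul_assoc c r a := by rw [smul_def', map_smul]; rfl

lemma gen_smul (g : AGen x y n) (a : X k x y n lv) : gen k g • a = act k lv g a := by
  rw [smul_def', opAct_gen]

lemma arrow_smul {g : AGen x y n} (hg : 2 ≤ g.lev) (w : List (AGen x y n)) (τ : T) :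
    gen k g • bs k lv w τ = bs k lv (g :: w) τ := by
  rw [gen_smul, act_arrow hg]

lemma idem_smul (t : ℕ) (w : List (AGen x y n)) (τ : T) :
    idem k x y n t • bs k lv w τ = if hd (lv τ) w % 2 = t % 2 then bs k lv w τ else 0 := by
  rcases Nat.mod_two_eq_zero_or_one t with h | h
  · rw [idem, if_pos h, gen_smul, act_idem (by simp [AGen.lev])]
    simp only [AGen.lev, h]
    rfl
  · rw [idem, if_neg (by omega), gen_smul, act_idem (by simp [AGen.lev])]
    simp only [AGen.lev, h]
    rfl

/-- The idempotent of the right parity fixes the product of a valid word with a vector `m`, if this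
holds for the empty word. -/
lemma idem_smul_foldr {N : Type} [AddCommGroup N] [Module (AOp k x y n) N] {t : ℕ} {m : N}
    (h1 : idem k x y n t • m = m) (w : List (AGen x y n)) :
    idem k x y n (hd t w) • w.foldr (fun g b => gen k g • b) m =
      w.foldr (fun g b => gen k g • b) m := by
  cases w with
  | nil => exact h1
  | cons u w =>
    rw [List.foldr_cons, hd, smul_smul, idem_mul_gen]

/-- If an arrow cannot be put on top of a valid word, it annihilates the product of that
word with a vector `m`, provided this holds for the empty word. -/
lemma gen_smul_foldr {N : Type} [AddCommGroup N] [Module (AOp k x y n) N] {t : ℕ} {m : N}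
    (h1 : idem k x y n t • m = m)
    (h2 : ∀ g : AGen x y n, 2 ≤ g.lev → g.lev ≤ t → g.lev % 2 ≠ t % 2 → gen k g • m = 0)
    {w : List (AGen x y n)} (hw : Valid t w) {g : AGen x y n} (hg : 2 ≤ g.lev)
    (h : ¬ Valid t (g :: w)) :
    gen k g • w.foldr (fun g b => gen k g • b) m = 0 := by
  by_cases hp : g.lev % 2 = hd t w % 2
  · rw [← idem_smul_foldr h1, smul_smul, gen_mul_idem_eq_zero hg hp, zero_smul]
  · have hle : g.lev ≤ hd t w := by
      by_contra H
      exact h ⟨by omega, fun h => hp h.symm, hg, hw⟩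
    cases w with
    | nil => exact h2 g hg hle hp
    | cons u w =>
      rw [List.foldr_cons, smul_smul, gen_mul_gen_of_le hg hw.2.2.1 hle, zero_smul]

/-- Universal property of word modules: a module map out of it amounts to a family of vectors, the
one at `τ` being fixed by the idempotent and annihilated by the arrows which fix, resp. annihilate,
the empty word over `τ`. -/
def homX {N : Type} [AddCommGroup N] [Module (AOp k x y n) N] [Module k N]
    [IsScalarTower k (AOp k x y n) N] (m : T → N)
    (h1 : ∀ τ, idem k x y n (lv τ) • m τ = m τ)
    (h2 : ∀ τ (g : AGen x y n), 2 ≤ g.lev → g.lev ≤ lv τ → g.lev % 2 ≠ lv τ % 2 →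
      gen k g • m τ = 0) :
    X k x y n lv →ₗ[AOp k x y n] N where
  toFun := ofWords lv fun w τ => w.foldr (fun g b => gen k g • b) (m τ)
  map_add' := map_add _
  map_smul' r a := by
    have hsmul : ∀ (c : k) (b : N), c • b = algebraMap k (AOp k x y n) c • b := fun c b =>
      (algebraMap_smul _ _ _).symm
    rw [RingHom.id_apply]
    induction r using aop_induction generalizing a with
    | halg c => rw [algebraMap_smul, algebraMap_smul, map_smul]
    | hadd r s hr hs => rw [add_smul, add_smul, map_add, hr, hs]
    | hmul r s hr hs => rw [mul_smul, mul_smul, hr, hs]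
    | hgen g =>
      induction a using X_induction with
      | h0 => simp
      | hadd a b ha hb => rw [smul_add, map_add, map_add, smul_add, ha, hb]
      | hbs c w τ hw =>
        rw [gen_smul, map_smul, map_smul, map_smul, hsmul c, hsmul c, smul_smul,
          ← Algebra.commutes, ← smul_smul]
        congr 1
        rw [ofWords_bs hw]
        by_cases hg : 2 ≤ g.lev
        · rw [act_arrow hg]
          by_cases hv : Valid (lv τ) (g :: w)
          · rw [ofWords_bs hv]; rfl
          · rw [bs_of_not hv, map_zero, gen_smul_foldr (h1 τ) (h2 τ) hw hg hv]
        · have hgi : gen k g = idem k x y n g.lev := by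
            rcases g with _ | _ | _ | _
            · rfl
            · rfl
            · simp [AGen.lev] at hg
            · simp [AGen.lev] at hg
          rw [act_idem hg, hgi, ← idem_smul_foldr (h1 τ), smul_smul]
          split_ifs with h
          · rw [ofWords_bs hw, idem_mul_idem h.symm, idem_smul_foldr (h1 τ)]
          · rw [idem_mul_idem_of_ne (Ne.symm h), zero_smul, map_zero]

lemma homX_bs {N : Type} [AddCommGroup N] [Module (AOp k x y n) N] [Module k N]
    [IsScalarTower k (AOp k x y n) N] {m : T → N}
    {h1 : ∀ τ, idem k x y n (lv τ) • m τ = m τ}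
    {h2 : ∀ τ (g : AGen x y n), 2 ≤ g.lev → g.lev ≤ lv τ → g.lev % 2 ≠ lv τ % 2 →
      gen k g • m τ = 0} {w : List (AGen x y n)} {τ : T} (h : Valid (lv τ) w) :
    homX (lv := lv) m h1 h2 (bs k lv w τ) = w.foldr (fun g b => gen k g • b) (m τ) :=
  ofWords_bs (m := fun w τ => w.foldr (fun g b => gen k g • b) (m τ)) h

lemma homX_ext {N : Type} [AddCommGroup N] [Module (AOp k x y n) N]
    {f g : X k x y n lv →ₗ[AOp k x y n] N}
    (h : ∀ w τ, Valid (lv τ) w → f (bs k lv w τ) = g (bs k lv w τ)) : f = g := by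
  ext a
  induction a using X_induction with
  | h0 => simp
  | hadd a b ha hb => simp [ha, hb]
  | hbs c w τ hw =>
    rw [← algebraMap_smul (AOp k x y n) c, map_smul, map_smul, h w τ hw]

lemma foldr_bs {w : List (AGen x y n)} (hw : ∀ u ∈ w, 2 ≤ u.lev) (w' : List (AGen x y n)) (τ : T) :
    w.foldr (fun g b => gen k g • b) (bs k lv w' τ) = bs k lv (w ++ w') τ := by
  induction w with
  | nil => rfl
  | cons u w ih =>
    rw [List.foldr_cons, ih fun v hv => hw v (List.mem_cons_of_mem _ hv),
      arrow_smul (hw u List.mem_cons_self)]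
    rfl

lemma foldr_zero {N : Type} [AddCommGroup N] [Module (AOp k x y n) N] (w : List (AGen x y n)) :
    w.foldr (fun g b => gen k g • b) (0 : N) = 0 := by
  induction w with
  | nil => rfl
  | cons u w ih => rw [List.foldr_cons, ih, smul_zero]

lemma idem_smul_nil (τ : T) :
    idem k x y n (lv τ) • (bs k lv [] τ : X k x y n lv) = bs k lv [] τ := by
  rw [idem_smul, if_pos]
  rfl

lemma arrow_smul_nil (τ : T) (g : AGen x y n) (hg : 2 ≤ g.lev) (h : g.lev ≤ lv τ) :
    gen k g • (bs k lv [] τ : X k x y n lv) = 0 := by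
  rw [arrow_smul hg, bs_of_not]
  intro H
  have : lv τ < g.lev := H.1
  omega

/-! ### Syzygies of word modules -/

variable (x y n lv) in
/-- The pairs `(v, τ)` for which `v` is an arrow that annihilates the empty word over `τ`, although
its source and target would allow to put it on top: the bottoms of the syzygy. -/
def Syz : Type :=
  {p : AGen x y n × T // 2 ≤ p.1.lev ∧ p.1.lev < lv p.2 ∧ p.1.lev % 2 ≠ lv p.2 % 2}

variable (x y n lv) in
/-- The levels of the bottoms of the syzygy. -/
def syzLev (σ : Syz x y n lv) : ℕ := σ.1.1.lev

/-- The levels of the bottoms of the projective cover. -/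
abbrev covLev (lv : T → ℕ) (τ : T) : ℕ := lv τ % 2

variable (k x y n lv) in
/-- The inclusion of the syzygy. -/
def inc : X k x y n (syzLev x y n lv) →ₗ[AOp k x y n] X k x y n (covLev lv) :=
  homX (fun σ => bs k (covLev lv) [σ.1.1] σ.1.2)
    (fun σ => by rw [idem_smul, if_pos]; rfl)
    (fun σ g hg h _ => by
      rw [arrow_smul hg, bs_of_not]
      intro H
      have : σ.1.1.lev < g.lev := H.1
      have : g.lev ≤ σ.1.1.lev := h
      omega)

lemma valid_syz (σ : Syz x y n lv) (w : List (AGen x y n)) :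
    Valid (covLev lv σ.1.2) (w ++ [σ.1.1]) ↔ Valid (syzLev x y n lv σ) w := by
  rw [valid_append]
  have h1 := σ.2.1
  have h2 := σ.2.2.2
  exact ⟨fun h => h.1, fun h => ⟨h, by simp only [covLev]; omega, by simp only [covLev]; omega, h1⟩⟩

lemma inc_bs (w : List (AGen x y n)) (σ : Syz x y n lv) :
    inc k x y n lv (bs k _ w σ) = bs k _ (w ++ [σ.1.1]) σ.1.2 := by
  by_cases h : Valid (syzLev x y n lv σ) w
  · rw [inc, homX_bs h, foldr_bs h.two_le]
  · rw [bs_of_not h, map_zero, bs_of_not (by rwa [valid_syz])]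

variable (k x y n lv) in
/-- The projective cover of a word module. -/
def cov : X k x y n (covLev lv) →ₗ[AOp k x y n] X k x y n lv :=
  homX (fun τ => bs k lv [] τ)
    (fun τ => by rw [idem_smul, if_pos]; simp [hd, covLev])
    (fun τ g hg h _ => by simp only [covLev] at h; omega)

lemma cov_bs (w : List (AGen x y n)) (τ : T) :
    cov k x y n lv (bs k _ w τ) = bs k _ w τ := by
  by_cases h : Valid (covLev lv τ) w
  · rw [cov, homX_bs h, foldr_bs h.two_le, List.append_nil]
  · rw [bs_of_not h, map_zero, bs_of_not fun H => h H.mod_two]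

lemma cov_comp_inc (a) : cov k x y n lv (inc k x y n lv a) = 0 := by
  have : cov k x y n lv ∘ₗ inc k x y n lv = 0 := homX_ext fun w σ hw => by
    rw [LinearMap.comp_apply, inc_bs, cov_bs, bs_of_not, LinearMap.zero_apply]
    rw [valid_append]
    have := σ.2.2.1
    omega
  exact LinearMap.congr_fun this a

lemma smul_bs_mem_range {M : Type} [AddCommGroup M] [Module (AOp k x y n) M]
    (f : M →ₗ[AOp k x y n] X k x y n lv) (c : k) {b : X k x y n lv} (h : ∃ a, f a = b) :
    ∃ a, f a = c • b := by
  obtain ⟨a, rfl⟩ := h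
  exact ⟨algebraMap k (AOp k x y n) c • a, by rw [map_smul, algebraMap_smul]⟩

lemma cov_surjective : Function.Surjective (cov k x y n lv) := by
  intro b
  induction b using X_induction with
  | h0 => exact ⟨0, map_zero _⟩
  | hadd a b ha hb =>
    obtain ⟨a, rfl⟩ := ha
    obtain ⟨b, rfl⟩ := hb
    exact ⟨a + b, map_add _ _ _⟩
  | hbs c w τ hw => exact smul_bs_mem_range _ _ ⟨_, cov_bs w τ⟩

/-- A word over the cover either is valid over `lv`, or its bottom arrow belongs to the syzygy;
so every vector is congruent modulo the syzygy to its image under the obvious section. -/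
lemma exists_inc_add (a : X k x y n (covLev lv)) :
    ∃ b, a = inc k x y n lv b + ofWords lv (bs k (covLev lv)) (cov k x y n lv a) := by
  induction a using X_induction with
  | h0 => exact ⟨0, by simp⟩
  | hadd a b ha hb =>
    obtain ⟨a', ha⟩ := ha
    obtain ⟨b', hb⟩ := hb
    refine ⟨a' + b', ?_⟩
    conv_lhs => rw [ha, hb]
    simp only [map_add]
    abel
  | hbs c w τ hw =>
    suffices ∃ b, bs k _ w τ =
        inc k x y n lv b + ofWords lv (bs k (covLev lv)) (cov k x y n lv (bs k _ w τ)) by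
      obtain ⟨b, hb⟩ := this
      refine ⟨algebraMap k (AOp k x y n) c • b, ?_⟩
      rw [← algebraMap_smul (AOp k x y n) c (bs k _ w τ), map_smul, map_smul, algebraMap_smul,
        algebraMap_smul, algebraMap_smul, map_smul, ← smul_add, ← hb]
    rw [cov_bs]
    by_cases h : Valid (lv τ) w
    · exact ⟨0, by rw [ofWords_bs h, map_zero, zero_add]⟩
    · rw [bs_of_not h, map_zero]
      rcases List.eq_nil_or_concat w with rfl | ⟨w, v, rfl⟩
      · exact absurd trivial h
      · rw [List.concat_eq_append] at h hw ⊢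
        rw [valid_append] at h hw
        simp only [covLev] at hw
        have hp : v.lev % 2 ≠ lv τ % 2 := by omega
        have hlt : v.lev < lv τ := by
          by_contra H
          exact h ⟨hw.1, by
            rcases Nat.lt_or_ge (lv τ) v.lev with h' | h'
            · exact h'
            · exact absurd (congrArg (· % 2) (show v.lev = lv τ by omega)) hp, hp.symm, hw.2.2.2⟩
        let σ : Syz x y n lv := ⟨(v, τ), hw.2.2.2, hlt, hp⟩
        exact ⟨bs k _ w σ, by rw [inc_bs, add_zero]⟩

lemma exact_inc_cov : Function.Exact (inc k x y n lv) (cov k x y n lv) := by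
  intro a
  constructor
  · intro h
    obtain ⟨b, hb⟩ := exists_inc_add a
    rw [h, map_zero, add_zero] at hb
    exact ⟨b, hb.symm⟩
  · rintro ⟨b, rfl⟩
    exact cov_comp_inc b

lemma inc_injective : Function.Injective (inc k x y n lv) := by
  let j : {p : List (AGen x y n) × Syz x y n lv // Valid (syzLev x y n lv p.2) p.1} →
      {p : List (AGen x y n) × T // Valid (covLev lv p.2) p.1} := fun p =>
    ⟨(p.1.1 ++ [p.1.2.1.1], p.1.2.1.2), (valid_syz _ _).2 p.2⟩
  have hj : Function.Injective j := by
    rintro ⟨⟨w, ⟨⟨v, τ⟩, h⟩⟩, hw⟩ ⟨⟨w', ⟨⟨v', τ'⟩, h'⟩⟩, hw'⟩ H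
    simp only [j, Subtype.mk.injEq, Prod.mk.injEq] at H
    obtain ⟨h1, h2⟩ := List.append_inj' H.1 rfl
    simp only [List.cons.injEq, and_true] at h2
    obtain rfl := h1
    obtain rfl := h2
    obtain rfl := H.2
    rfl
  have key : ∀ a, inc k x y n lv a = Finsupp.mapDomain j a := by
    intro a
    induction a using X_induction with
    | h0 => rw [map_zero]; exact Finsupp.mapDomain_zero.symm
    | hadd a b ha hb => rw [map_add, ha, hb]; exact Finsupp.mapDomain_add.symm
    | hbs c w σ hw =>
      rw [← algebraMap_smul (AOp k x y n) c, map_smul, algebraMap_smul, algebraMap_smul, inc_bs,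
        bs_of_valid ((valid_syz σ w).2 hw), bs_of_valid hw]
      erw [Finsupp.mapDomain_smul, Finsupp.mapDomain_single]
      rfl
  intro a b h
  rw [key, key] at h
  exact Finsupp.mapDomain_injective hj h

end WordModule

/-! ### Projective dimensions -/

lemma shortExact_of_exact {R : Type} [Ring R] {M₁ M₂ M₃ : Type} [AddCommGroup M₁]
    [AddCommGroup M₂] [AddCommGroup M₃] [Module R M₁] [Module R M₂] [Module R M₃]
    (f : M₁ →ₗ[R] M₂) (g : M₂ →ₗ[R] M₃) (hf : Function.Injective f) (hg : Function.Surjective g)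
    (h : Function.Exact f g) :
    (ShortComplex.mk (ModuleCat.ofHom f) (ModuleCat.ofHom g)
      (by ext a; exact h.apply_apply_eq_zero a)).ShortExact where
  exact := by
    rw [ShortComplex.moduleCat_exact_iff]
    intro b hb
    exact (h b).1 hb
  mono_f := (ModuleCat.mono_iff_injective _).2 hf
  epi_g := (ModuleCat.epi_iff_surjective _).2 hg

variable (k x y n) in
/-- `PD k x y n M m` says that the projective dimension of the right `A_n(x,y)`-module `M` is less
than `m`. -/
abbrev PD (M : Type) [AddCommGroup M] [Module (AOp k x y n) M] (m : ℕ) : Prop :=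
  HasProjectiveDimensionLT (ModuleCat.of (AOp k x y n) M) m

lemma syz_shortExact {T : Type} (lv : T → ℕ) :
    (ShortComplex.mk (ModuleCat.ofHom (inc k x y n lv)) (ModuleCat.ofHom (cov k x y n lv))
      (by ext a; exact cov_comp_inc a)).ShortExact :=
  shortExact_of_exact _ _ inc_injective cov_surjective exact_inc_cov

/-- The word module with bottoms of level at most `2` is projective: no arrow that could be put on
top of such a bottom annihilates it, so the image of the empty words can be lifted arbitrarily. -/
lemma projective_X {T : Type} (lv : T → ℕ) (h : ∀ τ, lv τ ≤ 2) :
    Module.Projective (AOp k x y n) (X k x y n lv) := by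
  refine Module.Projective.of_lifting_property'' fun f hf => ?_
  choose m hm using fun τ => hf (bs k lv [] τ)
  refine ⟨homX (fun τ => idem k x y n (lv τ) • m τ)
    (fun τ => by rw [smul_smul, idem_mul_idem rfl])
    (fun τ g hg hle hne => absurd (by have := h τ; omega) hne), homX_ext fun w τ hw => ?_⟩
  rw [LinearMap.comp_apply, homX_bs hw, LinearMap.id_apply]
  have hfold : ∀ a, f (w.foldr (fun g b => gen k g • b) a) =
      w.foldr (fun g b => gen k g • b) (f a) := by
    intro a
    clear hw
    induction w with
    | nil => rfl
    | cons u w ih => rw [List.foldr_cons, map_smul, ih, List.foldr_cons]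
  rw [hfold, map_smul, hm, idem_smul_nil, foldr_bs hw.two_le, List.append_nil]

lemma pd_cov {T : Type} (lv : T → ℕ) (d : ℕ) : PD k x y n (X k x y n (covLev lv)) (d + 1) := by
  have : Module.Projective (AOp k x y n) (X k x y n (covLev lv)) :=
    projective_X _ fun τ => by simp only [covLev]; omega
  have : Projective (ModuleCat.of (AOp k x y n) (X k x y n (covLev lv))) :=
    (IsProjective.iff_projective _).1 this
  exact hasProjectiveDimensionLT_of_ge _ 1 _ (by omega)

/-- The word module with bottoms of level at most `d + 2` has projective dimension at most `d`,
since passing to the syzygy lowers the level of the bottoms. -/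
lemma pd_X (d : ℕ) {T : Type} (lv : T → ℕ) (h : ∀ τ, lv τ ≤ d + 2) :
    PD k x y n (X k x y n lv) (d + 1) := by
  induction d generalizing T with
  | zero =>
    have := projective_X (k := k) (x := x) (y := y) (n := n) lv h
    have : Projective (ModuleCat.of (AOp k x y n) (X k x y n lv)) :=
      (IsProjective.iff_projective _).1 this
    change HasProjectiveDimensionLT _ 1
    infer_instance
  | succ d ih =>
    refine (syz_shortExact lv).hasProjectiveDimensionLT_X₃ (d + 1) (ih _ fun σ => ?_) (pd_cov lv _)
    have h1 := σ.2.2.1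
    have h2 := h σ.1.2
    change σ.1.1.lev ≤ _
    omega

section UpperBound

variable {N : Type} [AddCommGroup N] [Module (AOp k x y n) N]

/-- A semisimple module supported on one vertex is a word module all of whose bottoms
have the same level, one of `n + 1` and `n + 2`, on top of which no arrow can be put. -/
lemma pd_of_single (t : ℕ) (h1 : ∀ m : N, idem k x y n t • m = m)
    (h2 : ∀ (g : AGen x y n) (m : N), 2 ≤ g.lev → gen k g • m = 0) : PD k x y n N (n + 1) := by
  let _ : Module k N := Module.compHom _ (algebraMap k (AOp k x y n))
  have : IsScalarTower k (AOp k x y n) N :=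
    ⟨fun c r a => by rw [Algebra.smul_def, mul_smul]; rfl⟩
  let b := Module.Basis.ofVectorSpace k N
  -- the level in `{n + 1, n + 2}` which is congruent to `t` modulo `2`
  let lv : Module.Basis.ofVectorSpaceIndex k N → ℕ := fun _ => n + 1 + (n + 1 + t) % 2
  have hw : ∀ w τ, Valid (x := x) (y := y) (n := n) (lv τ) w → w = [] := by
    intro w τ h
    rcases List.eq_nil_or_concat w with rfl | ⟨w, v, rfl⟩
    · rfl
    · rw [List.concat_eq_append, valid_append] at h
      have h1 : n + 1 + (n + 1 + t) % 2 < v.lev := h.2.1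
      have := v.lev_le h.2.2.2
      omega
  have hid : ∀ τ, idem k x y n (lv τ) = idem k x y n t := fun τ => by
    have : (n + 1 + (n + 1 + t) % 2) % 2 = t % 2 := by omega
    simp only [idem, lv, this]
  let f : X k x y n lv →ₗ[AOp k x y n] N :=
    homX (fun τ => b τ) (fun τ => by rw [hid τ, h1]) (fun τ g hg _ _ => h2 g _ hg)
  have hf : ∀ τ, f (bs k lv [] τ) = b τ := fun τ => homX_bs trivial
  let r : N →ₗ[k] X k x y n lv := b.constr k fun τ => bs k lv [] τ
  have hr : ∀ τ, r (b τ) = bs k lv [] τ := fun τ => b.constr_basis k _ τ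
  have hrf : r ∘ₗ (f.restrictScalars k) = LinearMap.id := X_ext fun w τ h => by
    rw [hw w τ h]
    change r (f _) = _
    rw [hf, hr]
    rfl
  have hfr : (f.restrictScalars k) ∘ₗ r = LinearMap.id := b.ext fun τ => by
    change f (r _) = _
    rw [hr, hf]
    rfl
  let e : X k x y n lv ≃ₗ[AOp k x y n] N := LinearEquiv.ofBijective f
    ⟨Function.LeftInverse.injective (g := r) fun a => LinearMap.congr_fun hrf a,
      Function.RightInverse.surjective (g := r) fun a => LinearMap.congr_fun hfr a⟩
  have := pd_X (k := k) (x := x) (y := y) (n := n) n lv fun τ => by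
    change n + 1 + (n + 1 + t) % 2 ≤ _
    omega
  exact hasProjectiveDimensionLT_of_iso e.toModuleIso _

/-- The vectors annihilated by every generator in `G`.  They form a submodule because, by `hG`, they
are mapped to each other by all generators. -/
def killed (G : Set (AGen x y n))
    (hG : ∀ g ∈ G, ∀ (h : AGen x y n) (m : N), (∀ g ∈ G, gen k g • m = 0) →
      gen k g • gen k h • m = 0) :
    Submodule (AOp k x y n) N where
  carrier := {m | ∀ g ∈ G, gen k g • m = 0}
  add_mem' ha hb g hg := by rw [smul_add, ha g hg, hb g hg, add_zero]
  zero_mem' g _ := smul_zero _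
  smul_mem' r m hm := by
    induction r using aop_induction generalizing m with
    | halg c =>
      intro g hg
      rw [smul_smul, ← Algebra.commutes, ← smul_smul, hm g hg, smul_zero]
    | hgen h => exact fun g hg => hG g hg h m hm
    | hadd r s hr hs =>
      intro g hg
      rw [add_smul, smul_add, hr m hm g hg, hs m hm g hg, add_zero]
    | hmul r s hr hs =>
      rw [mul_smul]
      exact hr _ (hs m hm)

lemma pd_of_submodule (U : Submodule (AOp k x y n) N) (m : ℕ) (h1 : PD k x y n U m)
    (h2 : PD k x y n (N ⧸ U) m) :
    PD k x y n N m :=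
  (shortExact_of_exact U.subtype U.mkQ U.subtype_injective U.mkQ_surjective
    (LinearMap.exact_subtype_mkQ U)).hasProjectiveDimensionLT_X₂ m h1 h2

lemma gen_mul_of_lev_lt_two {g : AGen x y n} (hg : 2 ≤ g.lev) {h : AGen x y n} (hh : ¬ 2 ≤ h.lev) :
    gen k g * gen k h = 0 ∨ gen k g * gen k h = gen k g := by
  have hh' : gen k h = idem k x y n h.lev := by
    rcases h with _ | _ | _ | _
    · rfl
    · rfl
    · simp [AGen.lev] at hh
    · simp [AGen.lev] at hh
  rw [hh']
  by_cases hp : g.lev % 2 = h.lev % 2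
  · exact .inl (gen_mul_idem_eq_zero hg hp)
  · right
    have : idem k x y n h.lev = idem k x y n (g.lev + 1) := by
      simp only [idem, show h.lev % 2 = (g.lev + 1) % 2 by omega]
    rw [this, gen_mul_idem hg]

/-- A semisimple module is an extension of two modules supported on one vertex each. -/
lemma pd_of_semisimple (h2 : ∀ (g : AGen x y n) (m : N), 2 ≤ g.lev → gen k g • m = 0) :
    PD k x y n N (n + 1) := by
  let U : Submodule (AOp k x y n) N := killed {.e2} (by
    rintro _ rfl h m hm
    by_cases hh : 2 ≤ h.lev
    · rw [h2 h m hh, smul_zero]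
    · rcases h with _ | _ | _ | _
      · rw [smul_smul, gen_mul_gen_eq_zero .orth12, zero_smul]
      · rw [hm _ rfl, smul_zero]
      · simp [AGen.lev] at hh
      · simp [AGen.lev] at hh)
  have hsum : ∀ m : N, gen k (.e1 : AGen x y n) • m + gen k (.e2 : AGen x y n) • m = m := fun m => by
    rw [← add_smul, gen_e1_add_gen_e2, one_smul]
  refine pd_of_submodule U _ (pd_of_single 0 ?_ ?_) (pd_of_single 1 ?_ ?_)
  · rintro ⟨m, hm⟩
    have := hsum m
    rw [hm _ rfl, add_zero] at this
    exact Subtype.ext this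
  · rintro g ⟨m, hm⟩ hg
    exact Subtype.ext (h2 g m hg)
  · intro m
    obtain ⟨m, rfl⟩ := U.mkQ_surjective m
    rw [← map_smul]
    refine (Submodule.Quotient.eq U).2 ?_
    rintro _ rfl
    rw [smul_sub, smul_smul]
    change (gen k (.e2 : AGen x y n) * gen k .e2) • m - _ = 0
    rw [gen_mul_gen_eq .idem2]
    exact sub_self _
  · intro g m hg
    obtain ⟨m, rfl⟩ := U.mkQ_surjective m
    rw [← map_smul, h2 g m hg, map_zero]

/-- Modules annihilated by the arrows of level at least `t + 2`, by induction on `t`: the vectors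
annihilated by all arrows form a semisimple submodule, and it contains the image of every
arrow of the largest possible level. -/
lemma pd_of_level (t : ℕ) (h2 : ∀ (g : AGen x y n) (m : N), t + 2 ≤ g.lev → gen k g • m = 0) :
    PD k x y n N (n + 1) := by
  induction t generalizing N with
  | zero => exact pd_of_semisimple fun g m hg => h2 g m (by omega)
  | succ t ih =>
    let U : Submodule (AOp k x y n) N := killed {g | 2 ≤ g.lev} (by
      intro g hg h m hm
      by_cases hh : 2 ≤ h.lev
      · rw [hm h hh, smul_zero]
      · rw [smul_smul]
        rcases gen_mul_of_lev_lt_two (k := k) hg hh with H | H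
        · rw [H, zero_smul]
        · rw [H, hm g hg])
    refine pd_of_submodule U _ (pd_of_semisimple ?_) (ih ?_)
    · rintro g ⟨m, hm⟩ hg
      exact Subtype.ext (hm g hg)
    · intro g m hg
      obtain ⟨m, rfl⟩ := U.mkQ_surjective m
      rw [← map_smul]
      refine (Submodule.Quotient.mk_eq_zero U).2 ?_
      intro h hh
      rcases Nat.lt_or_ge h.lev (t + 3) with hlt | hge
      · rw [smul_smul, gen_mul_gen_of_le hh (by omega) (by omega), zero_smul]
      · exact h2 h _ (by omega)

end UpperBound

/-- Every right `A_n(x,y)`-module has projective dimension at most `n`. -/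
lemma pd_le (M : ModuleCat.{0} (AOp k x y n)) : HasProjectiveDimensionLT M (n + 1) :=
  pd_of_level (N := M) n fun g m hg => by
    have := g.lev_le (by omega)
    omega

/-! ### The lower bound -/

variable (k x y n) in
/-- The word module with a single bottom of level `t`. -/
abbrev MX (t : ℕ) : Type := X k x y n (fun _ : Unit => t)

lemma bs_nil_ne_zero {T : Type} (lv : T → ℕ) (τ : T) :
    (bs k lv [] τ : X k x y n lv) ≠ 0 := by
  rw [bs_of_valid (by trivial)]
  exact fun h => one_ne_zero (Finsupp.single_eq_zero.1 h)

/-- The arrows do not reach the empty words. -/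
lemma gen_smul_ne {T : Type} {lv : T → ℕ} {g : AGen x y n} (hg : 2 ≤ g.lev) (τ : T)
    (a : X k x y n lv) : gen k g • a ≠ bs k lv [] τ := by
  let c : X k x y n lv →ₗ[k] k := Finsupp.lapply ⟨([], τ), trivial⟩
  have hc : c ∘ₗ act k lv g = 0 := X_ext fun w τ' _ => by
    rw [LinearMap.comp_apply, act_arrow hg]
    by_cases h : Valid (lv τ') (g :: w)
    · rw [bs_of_valid h]
      exact Finsupp.single_eq_of_ne fun H => by simpa using congrArg (fun p => p.1.1) H
    · rw [bs_of_not h, map_zero]; rfl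
  intro h
  have h1 : c (gen k g • a) = 0 := by rw [gen_smul]; exact LinearMap.congr_fun hc a
  rw [h, bs_of_valid (by trivial)] at h1
  exact one_ne_zero ((Finsupp.single_eq_same (M := k)).symm.trans h1)

/-- A word module whose syzygy is nonzero is not projective: a splitting of the projective cover
would move the empty word over `τ` by a syzygy `b`, and applying an arrow `v` with `v τ = 0` would
write the bottom `(v, τ)` of the syzygy as `- v b`. -/
lemma not_projective_X {T : Type} (lv : T → ℕ) (σ : Syz x y n lv) :
    ¬ Module.Projective (AOp k x y n) (X k x y n lv) := by
  intro h
  obtain ⟨s, hs⟩ := Module.projective_lifting_property (cov k x y n lv) LinearMap.id cov_surjective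
  obtain ⟨⟨v, τ⟩, h2, hlt, hne⟩ := id σ
  let σ' : Syz x y n lv := ⟨(v, τ), h2, hlt, hne⟩
  obtain ⟨b, hb⟩ := exists_inc_add (s (bs k lv [] τ))
  rw [show cov k x y n lv (s (bs k lv [] τ)) = bs k lv [] τ from LinearMap.congr_fun hs _,
    ofWords_bs (by trivial)] at hb
  have h0 : gen k v • s (bs k lv [] τ) = 0 := by
    rw [← map_smul, arrow_smul_nil τ v h2 hlt.le, map_zero]
  rw [hb, smul_add, arrow_smul h2, ← map_smul] at h0
  have h1 : inc k x y n lv (bs k _ [] σ') = bs k _ [v] τ := inc_bs [] σ'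
  rw [← h1, ← map_add] at h0
  have h3 := inc_injective (h0.trans (map_zero _).symm)
  refine gen_smul_ne h2 σ' (-b) ?_
  rw [smul_neg, neg_eq_of_add_eq_zero_right h3]

/-- The module `M_{lv σ}` is a direct summand of the word module of `lv`. -/
lemma pd_summand {T : Type} [DecidableEq T] (lv : T → ℕ) (σ : T) (m : ℕ)
    (h : PD k x y n (X k x y n lv) m) : PD k x y n (MX k x y n (lv σ)) m := by
  let i : MX k x y n (lv σ) →ₗ[AOp k x y n] X k x y n lv :=
    homX (fun _ => bs k lv [] σ) (fun _ => idem_smul_nil σ)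
      (fun _ g hg h _ => arrow_smul_nil σ g hg h)
  let r : X k x y n lv →ₗ[AOp k x y n] MX k x y n (lv σ) :=
    homX (fun τ => if τ = σ then bs k _ [] () else 0)
      (fun τ => by
        split_ifs with H
        · subst H; exact idem_smul_nil ()
        · exact smul_zero _)
      (fun τ g hg h _ => by
        split_ifs with H
        · subst H; exact arrow_smul_nil () g hg h
        · exact smul_zero _)
  have hri : r ∘ₗ i = LinearMap.id := homX_ext fun w τ hw => by
    have hw' : Valid (lv σ) w := hw
    have h1 : i (bs k _ w τ) = bs k lv w σ := (homX_bs
        (lv := fun _ : Unit => lv σ) hw).trans (by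
      rw [foldr_bs (k := k) (lv := lv) hw'.two_le, List.append_nil])
    have h2 : r (bs k lv w σ) = bs k _ w () := (homX_bs (k := k) hw').trans (by
      rw [if_pos rfl, foldr_bs (k := k) hw'.two_le, List.append_nil])
    rw [LinearMap.comp_apply, h1, h2]
    rfl
  have R : Retract (ModuleCat.of (AOp k x y n) (MX k x y n (lv σ)))
      (ModuleCat.of (AOp k x y n) (X k x y n lv)) :=
    { i := ModuleCat.ofHom i
      r := ModuleCat.ofHom r
      retract := by rw [← ModuleCat.ofHom_comp, hri]; rfl }
  exact R.hasProjectiveDimensionLT m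

/-- The module `M_{d+2}` has projective dimension at least `d`: its syzygy has a direct summand
`M_{d+1}`. -/
lemma not_pd_MX (hx : ∀ i, 0 < x i) (hy : ∀ i, 0 < y i) (d : ℕ) (hd : d ≤ n) :
    ¬ PD k x y n (MX k x y n (d + 2)) d := by
  induction d with
  | zero =>
    intro h
    have := ModuleCat.subsingleton_of_isZero
      (isZero_of_hasProjectiveDimensionLT_zero (ModuleCat.of (AOp k x y n) (MX k x y n (0 + 2))))
    exact bs_nil_ne_zero (k := k) (x := x) (y := y) (n := n) (fun _ : Unit => 0 + 2) ()
      (this.elim _ _)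
  | succ d ih =>
    intro h
    obtain ⟨v, hv⟩ := AGen.exists_lev hx hy (n := n) (d + 2) (by omega) (by omega)
    let σ : Syz x y n (fun _ : Unit => d + 1 + 2) :=
      ⟨(v, ()), by change 2 ≤ v.lev; omega, by change v.lev < d + 1 + 2; omega,
        by change v.lev % 2 ≠ (d + 1 + 2) % 2; omega⟩
    cases d with
    | zero =>
      refine not_projective_X (k := k) _ σ ((IsProjective.iff_projective _).2 ?_)
      exact projective_iff_hasProjectiveDimensionLT_one.2 h
    | succ d =>
      classical
      have h1 := (syz_shortExact (k := k) (x := x) (y := y) (n := n)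
        (fun _ : Unit => d + 1 + 1 + 2)).hasProjectiveDimensionLT_X₁ (d + 1) (pd_cov _ _) h
      have h2 := pd_summand _ σ _ h1
      rw [show syzLev x y n _ σ = d + 1 + 2 from hv] at h2
      exact ih (by omega) h2

/-- STATEMENT 10: the global dimension of `A_n(x,y)` equals `n`. -/
theorem AAlgebra_globalDimension (k : Type) [Field k] (x y : ℕ → ℕ)
    (hx : ∀ i, 0 < x i) (hy : ∀ i, 0 < y i) (n : ℕ) :
    (∀ (M N : ModuleCat (AAlgebra k x y n)ᵐᵒᵖ) (p : ℕ), n < p →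
      Subsingleton
        (((Ext k (ModuleCat (AAlgebra k x y n)ᵐᵒᵖ) p).obj (Opposite.op M)).obj N)) ∧
    (∃ M N : ModuleCat (AAlgebra k x y n)ᵐᵒᵖ,
      ¬ Subsingleton
        (((Ext k (ModuleCat (AAlgebra k x y n)ᵐᵒᵖ) n).obj (Opposite.op M)).obj N)) := by
  constructor
  · rintro M N (_ | p) hp
    · omega
    · have := pd_le M
      exact subsingleton_ext_of_abelianExt.{1, 0, 0}
        (HasProjectiveDimensionLT.subsingleton M (n + 1) (p + 1) (by omega) N)
  · by_contra! H
    refine not_pd_MX (k := k) hx hy n le_rfl ?_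
    have hle := pd_le (ModuleCat.of (AOp k x y n) (MX k x y n (n + 2)))
    refine HasProjectiveDimensionLT.mk fun i hi N e => ?_
    rcases hi.eq_or_lt with rfl | hi
    · have := subsingleton_abelianExt_of_ext.{1, 0, 0} (H (ModuleCat.of _ (MX k x y n (n + 2))) N)
      exact Subsingleton.elim _ _
    · exact e.eq_zero_of_hasProjectiveDimensionLT (n + 1) hi

end
end

section
/- The quadratic dual A_n(x,y)^!, graded by path length, satisfies: the degree-p component (A_n(x,y)^!)^p vanishes for all p > n; moreover dim_k (A_n(x,y)^!)^n = ∏_{i=1}^{m} x_i y_i if n = 2m with m ≥ 1, and dim_k (A_n(x,y)^!)^n = x_{m+1} · ∏_{i=1}^{m} x_i y_i if n = 2m+1 with m ≥ 0. -/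
/-!
Give the arrow `a i j` the rank `2 * i` and the arrow `b i j` the rank `2 * i + 1`, so that the
ranks are exactly `0, …, n - 1`.  The relations of `A_n(x,y)^!` then say that a product of two
arrows vanishes unless the rank strictly decreases (`rankArrow_mul_eq_zero`).  A nonzero product
of arrows therefore has at most `n` factors, and one with `n` factors contains one arrow of each
rank, in decreasing order (`prod_arrows`).  This gives the vanishing above degree `n` and a
spanning set of the top component indexed by the choices of one arrow of each rank.

These top words are linearly independent because `A_n(x,y)^!` acts on the space with basis the
lists of natural numbers: an arrow of rank `r` and index `j` prepends `j` to a list of length `r`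
and kills the other lists, while `e₁` and `e₂` project onto lists of even and odd length
(`listRep`).  A top word sends the empty list to the list of its indices, and distinct top words
have distinct index lists (`linearIndependent_descWord`).  The dimension is thus the product of
the numbers of arrows of each rank.
-/

/-!
Statement 12: the quadratic dual `A_n(x,y)^!`, graded by path length, satisfies
`(A_n(x,y)^!)^p = 0` for `p > n`, and the top component `(A_n(x,y)^!)^n` has dimension
`∏_{i=1}^m x_i y_i` if `n = 2m` (`m ≥ 1`), and `x_{m+1} ∏_{i=1}^m x_i y_i` if
`n = 2m+1` (`m ≥ 0`).
-/

noncomputable section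
set_option linter.unusedSectionVars false

variable (k : Type) [Field k] (x y : ℕ → ℕ) (n : ℕ)

/-- The relations defining the quadratic dual `A_n(x,y)^!`: the same path algebra
relations as for `A_n(x,y)`, but now the vanishing quadratic relations are
`α_{i,j} β_{i',j'} = 0` (i.e. `a i j * b i' j' = 0`) for `i ≤ i'`, and
`β_{i',j'} α_{i,j} = 0` (i.e. `b i' j' * a i j = 0`) for `i' < i`. -/
inductive ADualRel (k : Type) [Field k] (x y : ℕ → ℕ) (n : ℕ) :
    FreeAlgebra k (AGen x y n) → FreeAlgebra k (AGen x y n) → Prop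
  | idem1 : ADualRel k x y n (FreeAlgebra.ι k AGen.e1 * FreeAlgebra.ι k AGen.e1)
      (FreeAlgebra.ι k AGen.e1)
  | idem2 : ADualRel k x y n (FreeAlgebra.ι k AGen.e2 * FreeAlgebra.ι k AGen.e2)
      (FreeAlgebra.ι k AGen.e2)
  | orth12 : ADualRel k x y n (FreeAlgebra.ι k AGen.e1 * FreeAlgebra.ι k AGen.e2) 0
  | orth21 : ADualRel k x y n (FreeAlgebra.ι k AGen.e2 * FreeAlgebra.ι k AGen.e1) 0
  | sum : ADualRel k x y n (FreeAlgebra.ι k AGen.e1 + FreeAlgebra.ι k AGen.e2) 1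
  | a_tgt (i) (j) : ADualRel k x y n (FreeAlgebra.ι k AGen.e2 * FreeAlgebra.ι k (AGen.a i j))
      (FreeAlgebra.ι k (AGen.a i j))
  | a_src (i) (j) : ADualRel k x y n (FreeAlgebra.ι k (AGen.a i j) * FreeAlgebra.ι k AGen.e1)
      (FreeAlgebra.ι k (AGen.a i j))
  | b_tgt (i) (j) : ADualRel k x y n (FreeAlgebra.ι k AGen.e1 * FreeAlgebra.ι k (AGen.b i j))
      (FreeAlgebra.ι k (AGen.b i j))
  | b_src (i) (j) : ADualRel k x y n (FreeAlgebra.ι k (AGen.b i j) * FreeAlgebra.ι k AGen.e2)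
      (FreeAlgebra.ι k (AGen.b i j))
  | ab (i : Fin ((n + 1) / 2)) (j : Fin (x i)) (i' : Fin (n / 2)) (j' : Fin (y i'))
      (h : (i : ℕ) ≤ (i' : ℕ)) :
      ADualRel k x y n (FreeAlgebra.ι k (AGen.a i j) * FreeAlgebra.ι k (AGen.b i' j')) 0
  | ba (i : Fin ((n + 1) / 2)) (j : Fin (x i)) (i' : Fin (n / 2)) (j' : Fin (y i'))
      (h : (i' : ℕ) < (i : ℕ)) :
      ADualRel k x y n (FreeAlgebra.ι k (AGen.b i' j') * FreeAlgebra.ι k (AGen.a i j)) 0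

/-- The quadratic dual algebra `A_n(x,y)^!`. -/
def ADualAlgebra (k : Type) [Field k] (x y : ℕ → ℕ) (n : ℕ) : Type :=
  RingQuot (ADualRel k x y n)

instance (k : Type) [Field k] (x y : ℕ → ℕ) (n : ℕ) : Ring (ADualAlgebra k x y n) :=
  inferInstanceAs (Ring (RingQuot (ADualRel k x y n)))

instance (k : Type) [Field k] (x y : ℕ → ℕ) (n : ℕ) : Algebra k (ADualAlgebra k x y n) :=
  inferInstanceAs (Algebra k (RingQuot (ADualRel k x y n)))

variable (k : Type) [Field k] (x y : ℕ → ℕ) (n : ℕ)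

/-- The set of (images in `A_n(x,y)^!` of the) arrows of the quiver. -/
def ADualArrows : Set (ADualAlgebra k x y n) :=
  {z | (∃ i j, z = RingQuot.mkAlgHom k (ADualRel k x y n) (FreeAlgebra.ι k (AGen.a i j))) ∨
    (∃ i j, z = RingQuot.mkAlgHom k (ADualRel k x y n) (FreeAlgebra.ι k (AGen.b i j)))}

/-- The degree-`p` component of `A_n(x,y)^!` for `p ≥ 1` (with respect to the grading
by path length): the `k`-linear span of all products of `p` arrows. -/
def ADualGrade (p : ℕ) : Submodule k (ADualAlgebra k x y n) :=
  Submodule.span k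
    {z | ∃ l : List (ADualAlgebra k x y n),
      l.length = p ∧ (∀ u ∈ l, u ∈ ADualArrows k x y n) ∧ z = l.prod}

/-! ### Arrows indexed by rank -/

/-- The number of arrows of rank `r`: the arrows `a i j` have rank `2 * i`, and the arrows
`b i j` have rank `2 * i + 1`. -/
def rankCard (x y : ℕ → ℕ) (r : ℕ) : ℕ := if r % 2 = 0 then x (r / 2) else y (r / 2)

/-- The quotient map from the free algebra, with the type `ADualAlgebra` as its target. -/
def dualMk : FreeAlgebra k (AGen x y n) →ₐ[k] ADualAlgebra k x y n :=
  RingQuot.mkAlgHom k (ADualRel k x y n)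

/-- The `j`-th arrow of rank `r` as an element of `A_n(x,y)^!`, with the value `0` when there is
no such arrow. -/
def rankArrow (r j : ℕ) : ADualAlgebra k x y n :=
  if r % 2 = 0 then
    if h : r / 2 < (n + 1) / 2 ∧ j < x (r / 2) then
      dualMk k x y n (FreeAlgebra.ι k (AGen.a ⟨r / 2, h.1⟩ ⟨j, h.2⟩))
    else 0
  else
    if h : r / 2 < n / 2 ∧ j < y (r / 2) then
      dualMk k x y n (FreeAlgebra.ι k (AGen.b ⟨r / 2, h.1⟩ ⟨j, h.2⟩))
    else 0

variable {k x y n}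

lemma dualMk_rel {u v : FreeAlgebra k (AGen x y n)} (h : ADualRel k x y n u v) :
    dualMk k x y n u = dualMk k x y n v :=
  RingQuot.mkAlgHom_rel k h

lemma rankArrow_even {i j : ℕ} (hi : i < (n + 1) / 2) (hj : j < x i) :
    rankArrow k x y n (2 * i) j = dualMk k x y n (FreeAlgebra.ι k (AGen.a ⟨i, hi⟩ ⟨j, hj⟩)) := by
  have h2 : 2 * i / 2 = i := by omega
  unfold rankArrow
  rw [if_pos (by omega)]
  have aux : ∀ q, q = i → (if h : q < (n + 1) / 2 ∧ j < x q then
      dualMk k x y n (FreeAlgebra.ι k (AGen.a ⟨q, h.1⟩ ⟨j, h.2⟩)) else 0) =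
      dualMk k x y n (FreeAlgebra.ι k (AGen.a ⟨i, hi⟩ ⟨j, hj⟩)) := by
    rintro q rfl
    rw [dif_pos ⟨hi, hj⟩]
  exact aux _ h2

lemma rankArrow_odd {i j : ℕ} (hi : i < n / 2) (hj : j < y i) :
    rankArrow k x y n (2 * i + 1) j =
      dualMk k x y n (FreeAlgebra.ι k (AGen.b ⟨i, hi⟩ ⟨j, hj⟩)) := by
  have h2 : (2 * i + 1) / 2 = i := by omega
  unfold rankArrow
  rw [if_neg (by omega)]
  have aux : ∀ q, q = i → (if h : q < n / 2 ∧ j < y q then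
      dualMk k x y n (FreeAlgebra.ι k (AGen.b ⟨q, h.1⟩ ⟨j, h.2⟩)) else 0) =
      dualMk k x y n (FreeAlgebra.ι k (AGen.b ⟨i, hi⟩ ⟨j, hj⟩)) := by
    rintro q rfl
    rw [dif_pos ⟨hi, hj⟩]
  exact aux _ h2

lemma rankCard_even (i : ℕ) : rankCard x y (2 * i) = x i := by simp [rankCard]

lemma rankCard_odd (i : ℕ) : rankCard x y (2 * i + 1) = y i := by
  have h2 : (2 * i + 1) / 2 = i := by omega
  simp [rankCard, h2]

lemma mem_arrows_iff (z : ADualAlgebra k x y n) :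
    z ∈ ADualArrows k x y n ↔
      ∃ r j, r < n ∧ j < rankCard x y r ∧ z = rankArrow k x y n r j := by
  constructor
  · rintro (⟨i, j, rfl⟩ | ⟨i, j, rfl⟩)
    · exact ⟨2 * i, j, by omega, by rw [rankCard_even]; exact j.2, (rankArrow_even i.2 j.2).symm⟩
    · exact ⟨2 * i + 1, j, by omega, by rw [rankCard_odd]; exact j.2, (rankArrow_odd i.2 j.2).symm⟩
  · rintro ⟨r, j, hr, hj, rfl⟩
    obtain ⟨i, rfl | rfl⟩ := Nat.even_or_odd' r
    · rw [rankCard_even] at hj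
      have hi : i < (n + 1) / 2 := by omega
      exact Or.inl ⟨⟨i, hi⟩, ⟨j, hj⟩, rankArrow_even hi hj⟩
    · rw [rankCard_odd] at hj
      have hi : i < n / 2 := by omega
      exact Or.inr ⟨⟨i, hi⟩, ⟨j, hj⟩, rankArrow_odd hi hj⟩

/-- The defining relations of `A_n(x,y)^!`, read through ranks: a product of two arrows vanishes
unless the rank drops.  Arrows of equal parity are not composable, and for opposite parities this
is exactly a quadratic relation. -/
lemma rankArrow_mul_eq_zero {r s j j' : ℕ} (hr : r < n) (hj : j < rankCard x y r)
    (hs : s < n) (hj' : j' < rankCard x y s) (hrs : r ≤ s) :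
    rankArrow k x y n r j * rankArrow k x y n s j' = 0 := by
  obtain ⟨i, rfl | rfl⟩ := Nat.even_or_odd' r <;> obtain ⟨i', rfl | rfl⟩ := Nat.even_or_odd' s <;>
    simp only [rankCard_even, rankCard_odd] at hj hj'
  · rw [rankArrow_even (by omega) hj, rankArrow_even (by omega) hj', ← dualMk_rel (.a_src _ _),
      ← dualMk_rel (.a_tgt ⟨i', _⟩ _), ← map_mul, mul_assoc,
      ← mul_assoc (FreeAlgebra.ι k AGen.e1), map_mul, map_mul, dualMk_rel .orth12]
    simp
  · rw [rankArrow_even (by omega) hj, rankArrow_odd (by omega) hj', ← map_mul,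
      dualMk_rel (.ab _ _ _ _ (by simp only; omega)), map_zero]
  · rw [rankArrow_odd (by omega) hj, rankArrow_even (by omega) hj', ← map_mul,
      dualMk_rel (.ba _ _ _ _ (by simp only; omega)), map_zero]
  · rw [rankArrow_odd (by omega) hj, rankArrow_odd (by omega) hj', ← dualMk_rel (.b_src _ _),
      ← dualMk_rel (.b_tgt ⟨i', _⟩ _), ← map_mul, mul_assoc,
      ← mul_assoc (FreeAlgebra.ι k AGen.e2), map_mul, map_mul, dualMk_rel .orth21]
    simp

/-! ### Nonzero products of arrows -/

variable (k x y n) in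
/-- The product of the `f r`-th arrows of rank `r`, over `r = N - 1, …, 1, 0` in this order. -/
def descWord (f : ℕ → ℕ) : ℕ → ADualAlgebra k x y n
  | 0 => 1
  | N + 1 => rankArrow k x y n N (f N) * descWord f N

lemma descWord_congr {f g : ℕ → ℕ} {N : ℕ} (h : ∀ r < N, f r = g r) :
    descWord k x y n f N = descWord k x y n g N := by
  induction N with
  | zero => rfl
  | succ N ih =>
    simp only [descWord]
    rw [h N (by omega), ih fun r hr => h r (by omega)]

/-- In a nonzero product of arrows the ranks strictly decrease.  Hence, if the first factor has
rank below `N`, there are at most `N` factors, and if there are exactly `N`, then every rank below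
`N` occurs exactly once. -/
lemma prod_arrows (l : List (ADualAlgebra k x y n)) (hl : ∀ u ∈ l, u ∈ ADualArrows k x y n)
    (h0 : l.prod ≠ 0) (N : ℕ)
    (hN : ∀ u ∈ l.head?, ∃ r j, r < n ∧ r < N ∧ j < rankCard x y r ∧ u = rankArrow k x y n r j) :
    l.length ≤ N ∧ (l.length = N →
      ∃ f : ℕ → ℕ, (∀ r < N, f r < rankCard x y r) ∧ l.prod = descWord k x y n f N) := by
  induction l generalizing N with
  | nil =>
    refine ⟨Nat.zero_le _, ?_⟩
    rintro rfl
    exact ⟨0, by simp, rfl⟩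
  | cons u t ih =>
    obtain ⟨r, j, hr, hrN, hj, rfl⟩ := hN u (by simp)
    rw [List.prod_cons] at h0
    have ht : t.prod ≠ 0 := right_ne_zero_of_mul h0
    obtain ⟨hlen, htop⟩ := ih (fun v hv => hl v (List.mem_cons_of_mem _ hv)) ht r (by
      intro v hv
      cases t with
      | nil => simp at hv
      | cons w t =>
        obtain rfl : w = v := by simpa using hv
        obtain ⟨s, j', hs, hj', rfl⟩ := (mem_arrows_iff w).1 (hl w (by simp))
        refine ⟨s, j', hs, ?_, hj', rfl⟩
        by_contra hsr
        apply h0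
        rw [List.prod_cons, ← mul_assoc,
          rankArrow_mul_eq_zero hr hj hs hj' (not_lt.1 hsr), zero_mul])
    refine ⟨by rw [List.length_cons]; omega, fun hlN => ?_⟩
    rw [List.length_cons] at hlN
    obtain rfl : N = r + 1 := by omega
    obtain ⟨f, hf, hprod⟩ := htop (by omega)
    refine ⟨Function.update f r j, fun s hs => ?_, ?_⟩
    · by_cases hsr : s = r
      · subst hsr; simpa using hj
      · rw [Function.update_of_ne hsr]; exact hf s (by omega)
    · rw [List.prod_cons, hprod, descWord, Function.update_self]
      congr 1
      exact descWord_congr fun s hs => (Function.update_of_ne (by omega) _ _).symm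

lemma descWord_mem {f : ℕ → ℕ} (N : ℕ) (hN : N ≤ n) (hf : ∀ r < N, f r < rankCard x y r) :
    ∃ l : List (ADualAlgebra k x y n), l.length = N ∧ (∀ u ∈ l, u ∈ ADualArrows k x y n) ∧
      descWord k x y n f N = l.prod := by
  induction N with
  | zero => exact ⟨[], by simp, by simp, rfl⟩
  | succ N ih =>
    obtain ⟨l, hlen, hl, hprod⟩ := ih (by omega) fun r hr => hf r (by omega)
    refine ⟨rankArrow k x y n N (f N) :: l, by simp [hlen], ?_, by
      rw [List.prod_cons, descWord, hprod]⟩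
    intro u hu
    rcases List.mem_cons.1 hu with rfl | hu
    · exact (mem_arrows_iff _).2 ⟨N, f N, by omega, hf N (by omega), rfl⟩
    · exact hl u hu

/-! ### A representation separating the top words -/

/-- The operator on the space with basis the lists of natural numbers that prepends `j` to the
lists of length `r` and kills all other lists. -/
def stepOp (k : Type) [Field k] (r j : ℕ) : Module.End k (List ℕ →₀ k) :=
  Finsupp.linearCombination k
    (fun l : List ℕ => if l.length = r then Finsupp.single (j :: l) (1 : k) else 0)

/-- The projection onto the span of the lists whose length is congruent to `c` modulo `2`. -/
def parityOp (k : Type) [Field k] (c : ℕ) : Module.End k (List ℕ →₀ k) :=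
  Finsupp.linearCombination k
    (fun l : List ℕ => if l.length % 2 = c then Finsupp.single l (1 : k) else 0)

lemma stepOp_single (r j : ℕ) (l : List ℕ) :
    stepOp k r j (Finsupp.single l 1) =
      if l.length = r then Finsupp.single (j :: l) (1 : k) else 0 := by
  simp [stepOp]

lemma parityOp_single (c : ℕ) (l : List ℕ) :
    parityOp k c (Finsupp.single l 1) =
      if l.length % 2 = c then Finsupp.single l (1 : k) else 0 := by
  simp [parityOp]

lemma endo_ext {f g : Module.End k (List ℕ →₀ k)}
    (h : ∀ l : List ℕ, f (Finsupp.single l 1) = g (Finsupp.single l 1)) : f = g :=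
  Finsupp.lhom_ext' fun l => LinearMap.ext_ring (h l)

/-- The action of the generators on lists of natural numbers: an arrow of rank `r` and index `j`
prepends `j` to the lists of length `r`. -/
def genOp (k : Type) [Field k] (x y : ℕ → ℕ) (n : ℕ) :
    AGen x y n → Module.End k (List ℕ →₀ k)
  | .e1 => parityOp k 0
  | .e2 => parityOp k 1
  | .a i j => stepOp k (2 * i) j
  | .b i j => stepOp k (2 * i + 1) j

/-- The operators `genOp` satisfy the relations of `A_n(x,y)^!`.  An arrow of rank `r` maps lists
of length `r` to lists of length `r + 1`, so a product of two arrows acts nontrivially only when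
the rank drops by exactly one, and such products are not among the quadratic relations. -/
lemma genOp_rel {u v : FreeAlgebra k (AGen x y n)} (h : ADualRel k x y n u v) :
    FreeAlgebra.lift k (genOp k x y n) u = FreeAlgebra.lift k (genOp k x y n) v := by
  apply endo_ext
  intro l
  cases h <;>
    simp only [map_mul, map_add, map_one, map_zero, FreeAlgebra.lift_ι_apply, genOp,
      Module.End.mul_apply, LinearMap.add_apply, Module.End.one_apply, LinearMap.zero_apply,
      parityOp_single, stepOp_single] <;>
    split_ifs <;>
    (try simp only [map_zero, parityOp_single, stepOp_single, List.length_cons, add_zero,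
      zero_add]) <;>
    first
      | omega
      | (split_ifs <;> first | rfl | omega)

variable (k x y n) in
/-- The representation of `A_n(x,y)^!` on lists of natural numbers given by `genOp`. -/
def listRep : ADualAlgebra k x y n →ₐ[k] Module.End k (List ℕ →₀ k) :=
  RingQuot.liftAlgHom k ⟨FreeAlgebra.lift k (genOp k x y n), fun _ _ h => genOp_rel h⟩

lemma listRep_mk (g : AGen x y n) :
    listRep k x y n (dualMk k x y n (FreeAlgebra.ι k g)) =
      genOp k x y n g := by
  have := RingQuot.liftAlgHom_mkAlgHom_apply k (FreeAlgebra.lift k (genOp k x y n))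
    (fun _ _ h => genOp_rel h) (FreeAlgebra.ι k g)
  rw [FreeAlgebra.lift_ι_apply] at this
  exact this

lemma listRep_rankArrow {r j : ℕ} (hr : r < n) (hj : j < rankCard x y r) :
    listRep k x y n (rankArrow k x y n r j) = stepOp k r j := by
  obtain ⟨i, rfl | rfl⟩ := Nat.even_or_odd' r <;> simp only [rankCard_even, rankCard_odd] at hj
  · rw [rankArrow_even (by omega) hj, listRep_mk, genOp]
  · rw [rankArrow_odd (by omega) hj, listRep_mk, genOp]

/-- A word containing each rank below `N` once sends the empty list to the list of its indices. -/
lemma listRep_descWord {f : ℕ → ℕ} (N : ℕ) (hN : N ≤ n) (hf : ∀ r < N, f r < rankCard x y r) :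
    listRep k x y n (descWord k x y n f N) (Finsupp.single [] 1) =
      Finsupp.single ((List.range N).reverse.map f) (1 : k) := by
  induction N with
  | zero => simp [descWord]
  | succ N ih =>
    rw [descWord, map_mul, Module.End.mul_apply, ih (by omega) fun r hr => hf r (by omega),
      listRep_rankArrow (by omega) (hf N (by omega)), stepOp_single, if_pos (by simp)]
    simp [List.range_succ]

/-! ### The top component -/

/-- A choice of one index for every rank below `n`, extended by `0`. -/
def extendChoice (g : ∀ r : Fin n, Fin (rankCard x y r)) (r : ℕ) : ℕ :=
  if h : r < n then g ⟨r, h⟩ else 0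

lemma extendChoice_lt (g : ∀ r : Fin n, Fin (rankCard x y r)) (r : ℕ) (hr : r < n) :
    extendChoice g r < rankCard x y r := by
  rw [extendChoice, dif_pos hr]
  exact (g ⟨r, hr⟩).2

lemma linearIndependent_descWord :
    LinearIndependent k
      (fun g : ∀ r : Fin n, Fin (rankCard x y r) => descWord k x y n (extendChoice g) n) := by
  refine LinearIndependent.of_comp
    ((LinearMap.applyₗ (Finsupp.single ([] : List ℕ) (1 : k))).comp
      (listRep k x y n).toLinearMap) ?_
  have hinj : Function.Injective (fun g : ∀ r : Fin n, Fin (rankCard x y r) =>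
      (List.range n).reverse.map (extendChoice g)) := by
    intro g g' h
    funext r
    have := List.map_inj_left.1 h r (by simp)
    simp only [extendChoice, dif_pos r.2] at this
    exact Fin.ext this
  convert (Finsupp.linearIndependent_single_one k (List ℕ)).comp _ hinj using 1
  funext g
  exact listRep_descWord n le_rfl (extendChoice_lt g)

/-- The nonzero products of `n` arrows contain one arrow of each rank, in decreasing order,
so these words span the component of degree `n`. -/
lemma grade_top_eq_span :
    ADualGrade k x y n n = Submodule.span k (Set.range
      (fun g : ∀ r : Fin n, Fin (rankCard x y r) => descWord k x y n (extendChoice g) n)) := by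
  apply le_antisymm
  · refine Submodule.span_le.2 ?_
    rintro z ⟨l, hlen, hl, rfl⟩
    by_cases h0 : l.prod = 0
    · rw [h0]; exact Submodule.zero_mem _
    obtain ⟨f, hf, hprod⟩ := (prod_arrows l hl h0 n (by
      intro u hu
      obtain ⟨r, j, hr, hj, rfl⟩ := (mem_arrows_iff u).1 (hl u (List.mem_of_mem_head? hu))
      exact ⟨r, j, hr, hr, hj, rfl⟩)).2 hlen
    refine Submodule.subset_span ⟨fun r => ⟨f r, hf r r.2⟩, ?_⟩
    rw [hprod]
    exact descWord_congr fun r hr => by simp [extendChoice, hr]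
  · refine Submodule.span_mono ?_
    rintro z ⟨g, rfl⟩
    exact descWord_mem n le_rfl (extendChoice_lt g)

lemma finrank_grade_top :
    Module.finrank k (ADualGrade k x y n n) = ∏ r ∈ Finset.range n, rankCard x y r := by
  rw [grade_top_eq_span, finrank_span_eq_card linearIndependent_descWord, Fintype.card_pi,
    Finset.prod_range]
  simp

lemma grade_eq_bot {p : ℕ} (hp : n < p) : ADualGrade k x y n p = ⊥ := by
  refine Submodule.span_eq_bot.2 ?_
  rintro z ⟨l, hlen, hl, rfl⟩
  by_contra h0
  have := (prod_arrows l hl h0 n (by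
    intro u hu
    obtain ⟨r, j, hr, hj, rfl⟩ := (mem_arrows_iff u).1 (hl u (List.mem_of_mem_head? hu))
    exact ⟨r, j, hr, hr, hj, rfl⟩)).1
  omega

lemma prod_rankCard (m : ℕ) :
    ∏ r ∈ Finset.range (2 * m), rankCard x y r = ∏ i ∈ Finset.range m, x i * y i := by
  induction m with
  | zero => simp
  | succ m ih =>
    rw [show 2 * (m + 1) = 2 * m + 1 + 1 by ring, Finset.prod_range_succ, Finset.prod_range_succ,
      Finset.prod_range_succ, ih, rankCard_even, rankCard_odd, mul_assoc]

/-- STATEMENT 12: the components of the quadratic dual `A_n(x,y)^!` vanish in degrees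
`p > n`, and the dimension of the degree-`n` component is `∏_{i=1}^m x_i y_i` for
`n = 2m` (`m ≥ 1`) and `x_{m+1} ∏_{i=1}^m x_i y_i` for `n = 2m+1` (`m ≥ 0`). -/
theorem ADualAlgebra_grading (k : Type) [Field k] (x y : ℕ → ℕ)
    (hx : ∀ i, 0 < x i) (hy : ∀ i, 0 < y i) (n : ℕ) :
    (∀ p : ℕ, n < p → ADualGrade k x y n p = ⊥) ∧
    (∀ m : ℕ, 1 ≤ m → n = 2 * m →
      Module.finrank k (ADualGrade k x y n n) = ∏ i ∈ Finset.range m, x i * y i) ∧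
    (∀ m : ℕ, n = 2 * m + 1 →
      Module.finrank k (ADualGrade k x y n n) = x m * ∏ i ∈ Finset.range m, x i * y i) := by
  refine ⟨fun p hp => grade_eq_bot hp, ?_, ?_⟩
  · rintro m - rfl
    rw [finrank_grade_top, prod_rankCard]
  · rintro m rfl
    rw [finrank_grade_top, Finset.prod_range_succ, prod_rankCard, rankCard_even, mul_comm]

end
end
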